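/- arXiv:0805.0582 — 3 statements merged into one kernel-verified Lean document; each statement's English description precedes it below -/
import Mathlib

section
/- (Proposition 3.7, absolute case K = k.) Assume conditions (i)–(iii) hold, f is convolution invertible with inverse f^{-1}, and f takes its values in k·1_A. Let Ā = A/k·1_A and for r ≥ 0 let M_r = E ⊗_k Ā^{⊗r}, where E = A #_f H. For h ∈ H and a_1, …, a_r ∈ A set (a_1 ⊗ ⋯ ⊗ a_r)^h = a_1^{h^{(1)}} ⊗ ⋯ ⊗ a_r^{h^{(r)}}. Then the formula h ▶ (x ⊗ ā_1 ⊗ ⋯ ⊗ ā_r) = γ(h^{(3)}) x γ^{-1}(h^{(1)}) ⊗ class of (a_1 ⊗ ⋯ ⊗ a_r)^{h^{(2)}} (for x ∈ E) gives a well-defined k-linear map H ⊗_k M_r → M_r which makes M_r a left H-module: 1 ▶ m = m and (l h) ▶ m = l ▶ (h ▶ m) for all h, l ∈ H, m ∈ M_r. -/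
open TensorProduct

noncomputable section CrossedProduct

variable (k A H : Type*) [CommRing k] [Ring A] [Algebra k A] [Ring H] [HopfAlgebra k H]

/-- A chosen "Sweedler representation" of the comultiplication of `H`:
`comul h = ∑_{i < n h} c₁ h i ⊗ c₂ h i` for every `h`. -/
def IsSweedlerRep (n : H → ℕ) (c₁ c₂ : H → ℕ → H) : Prop :=
  ∀ h : H, Coalgebra.comul (R := k) h = ∑ i ∈ Finset.range (n h), c₁ h i ⊗ₜ[k] c₂ h i

/-- `σ` is a weak action of `H` on `A`: `(ab)^h = a^{h⁽¹⁾} b^{h⁽²⁾}`, `1^h = ε(h)1`, `a^1 = a`. -/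
def IsWeakAction (n : H → ℕ) (c₁ c₂ : H → ℕ → H) (σ : H →ₗ[k] A →ₗ[k] A) : Prop :=
  (∀ (h : H) (a b : A),
      σ h (a * b) = ∑ i ∈ Finset.range (n h), σ (c₁ h i) a * σ (c₂ h i) b) ∧
  (∀ h : H, σ h (1 : A) = Coalgebra.counit (R := k) h • (1 : A)) ∧
  (∀ a : A, σ (1 : H) a = a)

/-- Condition (i): normality of the cocycle `f`. -/
def IsNormal (f : H →ₗ[k] H →ₗ[k] A) : Prop :=
  ∀ h : H, f h (1 : H) = Coalgebra.counit (R := k) h • (1 : A) ∧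
    f (1 : H) h = Coalgebra.counit (R := k) h • (1 : A)

/-- Condition (ii): the cocycle condition
`f(l⁽¹⁾,m⁽¹⁾)^{h⁽¹⁾} f(h⁽²⁾, l⁽²⁾m⁽²⁾) = f(h⁽¹⁾,l⁽¹⁾) f(h⁽²⁾l⁽²⁾, m)`. -/
def IsCocycle (n : H → ℕ) (c₁ c₂ : H → ℕ → H) (σ : H →ₗ[k] A →ₗ[k] A)
    (f : H →ₗ[k] H →ₗ[k] A) : Prop :=
  ∀ h l m : H,
    (∑ i ∈ Finset.range (n h), ∑ j ∈ Finset.range (n l), ∑ p ∈ Finset.range (n m),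
      σ (c₁ h i) (f (c₁ l j) (c₁ m p)) * f (c₂ h i) (c₂ l j * c₂ m p)) =
    ∑ i ∈ Finset.range (n h), ∑ j ∈ Finset.range (n l),
      f (c₁ h i) (c₁ l j) * f (c₂ h i * c₂ l j) m

/-- Condition (iii): the twisted module condition
`(a^{l⁽¹⁾})^{h⁽¹⁾} f(h⁽²⁾,l⁽²⁾) = f(h⁽¹⁾,l⁽¹⁾) a^{h⁽²⁾l⁽²⁾}`. -/
def IsTwistedModule (n : H → ℕ) (c₁ c₂ : H → ℕ → H) (σ : H →ₗ[k] A →ₗ[k] A)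
    (f : H →ₗ[k] H →ₗ[k] A) : Prop :=
  ∀ (h l : H) (a : A),
    (∑ i ∈ Finset.range (n h), ∑ j ∈ Finset.range (n l),
      σ (c₁ h i) (σ (c₁ l j) a) * f (c₂ h i) (c₂ l j)) =
    ∑ i ∈ Finset.range (n h), ∑ j ∈ Finset.range (n l),
      f (c₁ h i) (c₁ l j) * σ (c₂ h i * c₂ l j) a

/-- `finv` is the convolution inverse of `f`:
`f(h⁽¹⁾,l⁽¹⁾) f⁻¹(h⁽²⁾,l⁽²⁾) = f⁻¹(h⁽¹⁾,l⁽¹⁾) f(h⁽²⁾,l⁽²⁾) = ε(h)ε(l)1_A`. -/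
def IsConvInverse (n : H → ℕ) (c₁ c₂ : H → ℕ → H) (f finv : H →ₗ[k] H →ₗ[k] A) : Prop :=
  ∀ h l : H,
    (∑ i ∈ Finset.range (n h), ∑ j ∈ Finset.range (n l),
        f (c₁ h i) (c₁ l j) * finv (c₂ h i) (c₂ l j) =
      (Coalgebra.counit (R := k) h * Coalgebra.counit (R := k) l) • (1 : A)) ∧
    (∑ i ∈ Finset.range (n h), ∑ j ∈ Finset.range (n l),
        finv (c₁ h i) (c₁ l j) * f (c₂ h i) (c₂ l j) =
      (Coalgebra.counit (R := k) h * Coalgebra.counit (R := k) l) • (1 : A))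

/-- The multiplication of `A #_f H` as a bilinear map on `A ⊗[k] H`:
`(a # h)(b # l) = a b^{h⁽¹⁾} f(h⁽²⁾, l⁽¹⁾) # h⁽³⁾ l⁽²⁾`. -/
def crossedMul (σ : H →ₗ[k] A →ₗ[k] A) (f : H →ₗ[k] H →ₗ[k] A) :
    (A ⊗[k] H) →ₗ[k] (A ⊗[k] H) →ₗ[k] (A ⊗[k] H) :=
  TensorProduct.lift
    (((LinearMap.llcomp k (A ⊗[k] H) (A ⊗[k] H) (A ⊗[k] H)).comp
        (TensorProduct.curry
          ((LinearMap.rTensor H (LinearMap.mul' k A)) ∘ₗ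
            (TensorProduct.assoc k A A H).symm.toLinearMap))).compl₂
      (TensorProduct.curry
        ((LinearMap.rTensor H (LinearMap.mul' k A)) ∘ₗ
         (TensorProduct.map
            (TensorProduct.map (TensorProduct.lift σ) (TensorProduct.lift f))
            (LinearMap.mul' k H)) ∘ₗ
         (LinearMap.rTensor (H ⊗[k] H)
            (TensorProduct.tensorTensorTensorComm k H H A H).toLinearMap) ∘ₗ
         (TensorProduct.tensorTensorTensorComm k (H ⊗[k] H) H (A ⊗[k] H) H).toLinearMap ∘ₗ
         (TensorProduct.map
            ((LinearMap.rTensor H (Coalgebra.comul (R := k))) ∘ₗ (Coalgebra.comul (R := k)))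
            ((TensorProduct.assoc k A H H).symm.toLinearMap ∘ₗ
              (LinearMap.lTensor A (Coalgebra.comul (R := k))))))))

/-- The unit `1 # 1` of the crossed product. -/
def oneE : A ⊗[k] H := (1 : A) ⊗ₜ[k] (1 : H)

/-- The map `γ : H → A #_f H`, `γ(h) = 1 # h`. -/
def gam : H →ₗ[k] A ⊗[k] H := TensorProduct.mk k A H 1

/-- The map `h ↦ f⁻¹(S(h⁽²⁾), h⁽³⁾) # S(h⁽¹⁾)`, the convolution inverse of `γ`. -/
def gammaInv (finv : H →ₗ[k] H →ₗ[k] A) : H →ₗ[k] A ⊗[k] H :=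
  (TensorProduct.comm k H A).toLinearMap ∘ₗ
    (TensorProduct.map (HopfAlgebra.antipode (R := k))
      ((TensorProduct.lift finv) ∘ₗ (LinearMap.rTensor H (HopfAlgebra.antipode (R := k))))) ∘ₗ
    (LinearMap.lTensor H (Coalgebra.comul (R := k))) ∘ₗ (Coalgebra.comul (R := k))

/-- The canonical coaction `ν = id_A ⊗ Δ : A #_f H → (A #_f H) ⊗ H`. -/
def nuE : (A ⊗[k] H) →ₗ[k] (A ⊗[k] H) ⊗[k] H :=
  (TensorProduct.assoc k A H H).symm.toLinearMap ∘ₗ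
    (LinearMap.lTensor A (Coalgebra.comul (R := k)))

/-- Convolution product on `Hom_k(H, A #_f H)`: `(u * v)(h) = u(h⁽¹⁾) v(h⁽²⁾)`. -/
def convMul (σ : H →ₗ[k] A →ₗ[k] A) (f : H →ₗ[k] H →ₗ[k] A)
    (u v : H →ₗ[k] A ⊗[k] H) : H →ₗ[k] A ⊗[k] H :=
  (TensorProduct.lift (crossedMul k A H σ f)) ∘ₗ (TensorProduct.map u v) ∘ₗ
    (Coalgebra.comul (R := k))

/-- The unit of the convolution algebra `Hom_k(H, A #_f H)`: `h ↦ ε(h) 1_E`. -/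
def convOne : H →ₗ[k] A ⊗[k] H :=
  (LinearMap.toSpanSingleton k (A ⊗[k] H) (oneE k A H)) ∘ₗ (Coalgebra.counit (R := k))

/-- Sum over iterated (right-nested) Sweedler components:
`swSum n c₁ c₂ r h F = ∑ F (h⁽¹⁾, …, h⁽ʳ⁺¹⁾)`. -/
def swSum {M : Type*} [AddCommMonoid M] (n : H → ℕ) (c₁ c₂ : H → ℕ → H) :
    (r : ℕ) → H → ((Fin (r + 1) → H) → M) → M
  | 0, h, F => F (fun _ => h)
  | (r + 1), h, F =>
      ∑ i ∈ Finset.range (n h), swSum n c₁ c₂ r (c₂ h i) (fun g => F (Fin.cons (c₁ h i) g))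

/-- The product of a list of elements of the crossed product. -/
def prodE (σ : H →ₗ[k] A →ₗ[k] A) (f : H →ₗ[k] H →ₗ[k] A) :
    List (A ⊗[k] H) → A ⊗[k] H
  | [] => oneE k A H
  | x :: L => crossedMul k A H σ f x (prodE σ f L)

end CrossedProduct

/-!
All Sweedler identities are read in the convolution algebras `Hom(C, B)`, whose products are written
`u * v`; on `H ⊗ H` a map `u : H → B` has the two pullbacks `u₁`, `u₂` along the projections and the
pullback `u_μ` along the multiplication. The proposed action is the product `R * σ₁ * ⋯ * σ_r * L`
in `Hom(H, End M_r)`, where `R` multiplies by `γ⁻¹` on the right, `σᵢ` acts on the `i`-th factor and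
`L` multiplies by `γ` on the left. Since `f` takes values in `k·1`, it acts on `M_r` by a single
map `F`, and
`R₁ * R₂ * F = R_μ`, `(σᵢ)₁ * (σᵢ)₂ * F = F * (σᵢ)_μ`, `L₁ * L₂ = F * L_μ`.
The factors have pairwise commuting values, so these relations telescope and the product is
multiplicative. The first relation is the inverse of the third, which needs `γ⁻¹` to be a two-sided
convolution inverse of `γ`; one side comes from `γ(S h⁽¹⁾) γ(h⁽²⁾) = f(S h⁽¹⁾, h⁽²⁾)` and its
centrality, the other from `γ * (γ ∘ S)` having values in `A` and the freeness of `E` over `A`.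
-/

namespace HopfCrossedProduct

open Coalgebra WithConv HopfAlgebra Bialgebra

noncomputable section

section Inclusions

variable (k A B : Type*) [CommSemiring k] [Semiring A] [Algebra k A] [Semiring B] [Algebra k B]

/-- The inclusion `a ↦ a ⊗ 1`, as an algebra homomorphism over the ground ring. -/
abbrev inl : A →ₐ[k] A ⊗[k] B := Algebra.TensorProduct.includeLeft

/-- The inclusion `b ↦ 1 ⊗ b`, as an algebra homomorphism over the ground ring. -/
abbrev inr : B →ₐ[k] A ⊗[k] B := Algebra.TensorProduct.includeRight

end Inclusions

section Extensionality

variable {k B C D F : Type*} [CommSemiring k] [AddCommMonoid B] [Module k B] [AddCommMonoid C]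
  [Module k C] [AddCommMonoid D] [Module k D] [AddCommMonoid F] [Module k F]

/-- The convolution algebra `Hom_k(C, B)`; its elements are multiplied by
`(u * v)(c) = u(c⁽¹⁾) v(c⁽²⁾)`. -/
abbrev ConvHom (k C B : Type*) [CommSemiring k] [AddCommMonoid C] [Module k C]
    [AddCommMonoid B] [Module k B] : Type _ :=
  WithConv (C →ₗ[k] B)

lemma ConvHom.tensor_ext {u v : ConvHom k (C ⊗[k] D) B}
    (h : ∀ c d, u (c ⊗ₜ d) = v (c ⊗ₜ d)) : u = v :=
  WithConv.ext (TensorProduct.ext' h)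

lemma ConvHom.tensor_ext_threefold {u v : ConvHom k ((C ⊗[k] D) ⊗[k] F) B}
    (h : ∀ c d e, u (c ⊗ₜ d ⊗ₜ e) = v (c ⊗ₜ d ⊗ₜ e)) : u = v :=
  WithConv.ext (TensorProduct.ext_threefold h)

/-- Composition with a linear map, which need not be compatible with convolution. -/
def pullback (g : D →ₗ[k] C) (u : ConvHom k C B) : ConvHom k D B := toConv (u.ofConv ∘ₗ g)

@[simp] lemma pullback_apply (g : D →ₗ[k] C) (u : ConvHom k C B) (d : D) :
    pullback g u d = u (g d) := rfl

end Extensionality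

section Convolution

variable {k B B' C C' D D' : Type*} [CommSemiring k] [Semiring B] [Algebra k B]
  [Semiring B'] [Algebra k B'] [AddCommMonoid C] [Module k C] [Coalgebra k C]
  [AddCommMonoid C'] [Module k C'] [Coalgebra k C'] [AddCommMonoid D] [Module k D] [Coalgebra k D]
  [AddCommMonoid D'] [Module k D'] [Coalgebra k D']

/-- Composition with an algebra homomorphism, as a homomorphism of convolution algebras. -/
def postcomp (φ : B →ₐ[k] B') : ConvHom k C B →* ConvHom k C B' where
  toFun u := toConv (φ.toLinearMap ∘ₗ u.ofConv)
  map_one' := by ext c; simp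
  map_mul' u v := WithConv.ext (LinearMap.algHom_comp_convMul_distrib φ u v)

@[simp] lemma postcomp_apply (φ : B →ₐ[k] B') (u : ConvHom k C B) (c : C) :
    postcomp φ u c = φ (u c) := rfl

lemma postcomp_comp {B'' : Type*} [Semiring B''] [Algebra k B''] (ψ : B' →ₐ[k] B'')
    (φ : B →ₐ[k] B') (u : ConvHom k C B) : postcomp (ψ.comp φ) u = postcomp ψ (postcomp φ u) := rfl

/-- Composition with a coalgebra homomorphism, as a homomorphism of convolution algebras. -/
def precomp (g : D →ₗc[k] C) : ConvHom k C B →* ConvHom k D B where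
  toFun u := toConv (u.ofConv ∘ₗ g.toLinearMap)
  map_one' := by ext c; simp
  map_mul' u v := WithConv.ext (LinearMap.convMul_comp_coalgHom_distrib u v g)

@[simp] lemma precomp_apply (g : D →ₗc[k] C) (u : ConvHom k C B) (d : D) :
    precomp g u d = u (g d) := rfl

variable (k C D) in
/-- The coalgebra projection `id ⊗ ε : C ⊗ D → C`. -/
def fst : C ⊗[k] D →ₗc[k] C :=
  (Coalgebra.TensorProduct.rid k k C).toCoalgHom.comp
    (Coalgebra.TensorProduct.map (CoalgHom.id k C) (counitCoalgHom k D))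

variable (k C D) in
/-- The coalgebra projection `ε ⊗ id : C ⊗ D → D`. -/
def snd : C ⊗[k] D →ₗc[k] D :=
  (Coalgebra.TensorProduct.lid k D).toCoalgHom.comp
    (Coalgebra.TensorProduct.map (counitCoalgHom k C) (CoalgHom.id k D))

@[simp] lemma fst_tmul (c : C) (d : D) : fst k C D (c ⊗ₜ d) = counit (R := k) d • c := rfl

@[simp] lemma snd_tmul (c : C) (d : D) : snd k C D (c ⊗ₜ d) = counit (R := k) c • d := rfl

lemma precomp_map_fst (φ : C →ₗc[k] C') (ψ : D →ₗc[k] D') (u : ConvHom k C' B) :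
    precomp (Coalgebra.TensorProduct.map φ ψ) (precomp (fst k C' D') u) =
      precomp (fst k C D) (precomp φ u) :=
  ConvHom.tensor_ext fun c d => by simp

lemma sum_right_counit_smul {ι : Type*} {c : C} (r : Repr k c ι) :
    ∑ i ∈ r.index, counit (R := k) (r.right i) • r.left i = c := by
  simpa only [map_sum, TensorProduct.rid_tmul, one_smul] using
    congrArg (TensorProduct.rid k C) (sum_tmul_counit_eq r)

lemma convMul_tmul {ι κ : Type*} (u v : ConvHom k (C ⊗[k] D) B) {c : C} {d : D}
    (r : Repr k c ι) (s : Repr k d κ) :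
    (u * v) (c ⊗ₜ d) = ∑ i ∈ r.index, ∑ j ∈ s.index,
      u (r.left i ⊗ₜ s.left j) * v (r.right i ⊗ₜ s.right j) := by
  rw [LinearMap.convMul_apply, TensorProduct.comul_tmul, ← r.eq, ← s.eq]
  simp only [TensorProduct.sum_tmul, TensorProduct.tmul_sum, map_sum,
    TensorProduct.AlgebraTensorModule.tensorTensorTensorComm_tmul, TensorProduct.map_tmul,
    LinearMap.mul'_apply]
  exact Finset.sum_comm

lemma precomp_fst_mul_tmul {ι : Type*} (u : ConvHom k C B) (v : ConvHom k (C ⊗[k] D) B)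
    {c : C} (d : D) (r : Repr k c ι) :
    (precomp (fst k C D) u * v) (c ⊗ₜ d) = ∑ i ∈ r.index, u (r.left i) * v (r.right i ⊗ₜ d) := by
  rw [convMul_tmul _ _ r (ℛ k d)]
  refine Finset.sum_congr rfl fun i _ => ?_
  conv_rhs => rw [← sum_counit_smul (ℛ k d)]
  simp [TensorProduct.tmul_sum, Finset.mul_sum]

lemma precomp_fst_mul_precomp_snd (u : ConvHom k C B) (v : ConvHom k D B) (c : C) (d : D) :
    (precomp (fst k C D) u * precomp (snd k C D) v) (c ⊗ₜ d) = u c * v d := by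
  rw [precomp_fst_mul_tmul _ _ _ (ℛ k c)]
  conv_rhs => rw [← sum_right_counit_smul (ℛ k c)]
  simp [Finset.sum_mul]

lemma precomp_snd_mul_precomp_fst (u : ConvHom k C B) (v : ConvHom k D B) (c : C) (d : D) :
    (precomp (snd k C D) v * precomp (fst k C D) u) (c ⊗ₜ d) = v d * u c := by
  rw [convMul_tmul _ _ (ℛ k c) (ℛ k d)]
  conv_rhs => rw [← sum_counit_smul (ℛ k c), ← sum_right_counit_smul (ℛ k d)]
  simp only [precomp_apply, fst_tmul, snd_tmul, map_smul, mul_smul_comm, smul_mul_assoc, map_sum,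
    Finset.mul_sum, Finset.sum_mul, Finset.smul_sum]
  exact Finset.sum_congr rfl fun i _ => Finset.sum_congr rfl fun j _ => smul_comm _ _ _

lemma commute_precomp_fst_precomp_snd {u : ConvHom k C B} {v : ConvHom k D B}
    (h : ∀ c d, Commute (u c) (v d)) :
    Commute (precomp (fst k C D) u) (precomp (snd k C D) v) :=
  ConvHom.tensor_ext fun c d => by
    rw [precomp_fst_mul_precomp_snd, precomp_snd_mul_precomp_fst, (h c d).eq]

variable (k C) in
/-- The map `c ↦ ε(c) b`, the constant map with value `b` in the convolution algebra. -/
def ConvHom.const (b : B) : ConvHom k C B :=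
  toConv (LinearMap.toSpanSingleton k B b ∘ₗ counit)

@[simp] lemma ConvHom.const_apply (b : B) (c : C) :
    ConvHom.const k C b c = counit (R := k) c • b := rfl

lemma const_mul_apply (b : B) (u : ConvHom k C B) (c : C) :
    (ConvHom.const k C b * u) c = b * u c := by
  rw [(ℛ k c).convMul_apply]
  conv_rhs => rw [← sum_counit_smul (ℛ k c)]
  simp [Finset.mul_sum]

lemma mul_const_apply (b : B) (u : ConvHom k C B) (c : C) :
    (u * ConvHom.const k C b) c = u c * b := by
  rw [(ℛ k c).convMul_apply]
  conv_rhs => rw [← sum_right_counit_smul (ℛ k c)]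
  simp [Finset.sum_mul]

lemma commute_const_iff {b : B} {u : ConvHom k C B} :
    Commute (ConvHom.const k C b) u ↔ ∀ c, Commute b (u c) := by
  refine ⟨fun h c => ?_, fun h => WithConv.ext (LinearMap.ext fun c => ?_)⟩
  · rw [commute_iff_eq, ← const_mul_apply, ← mul_const_apply, h.eq]
  · exact (const_mul_apply b u c).trans ((h c).eq.trans (mul_const_apply b u c).symm)

lemma commute_apply_of_convInverse {u v : ConvHom k C B} (huv : u * v = 1) (hvu : v * u = 1)
    {b : B} (hb : ∀ c, Commute b (u c)) (c : C) : Commute b (v c) :=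
  commute_const_iff.mp ((commute_const_iff.mpr hb).units_inv_right (u := ⟨u, v, huv, hvu⟩)) c

variable (k B) in
/-- Evaluation at the unit of a bialgebra, as a homomorphism on the convolution algebra. -/
def evalOne (H : Type*) [Semiring H] [Bialgebra k H] : ConvHom k H B →* B where
  toFun u := u 1
  map_one' := by simp
  map_mul' u v := by simp [LinearMap.convMul_apply, Algebra.TensorProduct.one_def]

@[simp] lemma evalOne_apply {H : Type*} [Semiring H] [Bialgebra k H] (u : ConvHom k H B) :
    evalOne k B H u = u 1 := rfl

end Convolution

section CrossedMul

variable {k A H C D : Type*} [CommRing k] [Ring A] [Algebra k A] [Ring H] [HopfAlgebra k H]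
  [AddCommMonoid C] [Module k C] [Coalgebra k C] [AddCommMonoid D] [Module k D]
  (σ : H →ₗ[k] A →ₗ[k] A) (f : H →ₗ[k] H →ₗ[k] A)

/-- The map `h ↦ a ^ h` attached to `a ∈ A`. -/
def actionMap (a : A) : ConvHom k H A := toConv (σ.flip a)

@[simp] lemma actionMap_apply (a : A) (h : H) : actionMap σ a h = σ h a := rfl

/-- A bilinear map `H × H → A`, such as the cocycle `f`, as an element of `Hom_k(H ⊗ H, A)`. -/
def ofBilin : ConvHom k (H ⊗[k] H) A := toConv (TensorProduct.lift f)

@[simp] lemma ofBilin_tmul (h l : H) : ofBilin f (h ⊗ₜ l) = f h l := rfl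

/-- The map `c ⊗ d ↦ v(d) ^ φ(c)`. -/
def actionComp (φ : C →ₗc[k] H) (v : ConvHom k D A) : ConvHom k (C ⊗[k] D) A :=
  toConv (TensorProduct.lift σ ∘ₗ TensorProduct.map φ.toLinearMap v.ofConv)

@[simp] lemma actionComp_tmul (φ : C →ₗc[k] H) (v : ConvHom k D A) (c : C) (d : D) :
    actionComp σ φ v (c ⊗ₜ d) = σ (φ c) (v d) := rfl

/-- The map `c ↦ u(c⁽¹⁾) # φ(c⁽²⁾)`, written as a convolution product in the algebra `A ⊗ H`.
Maps of this form are closed under the multiplication of `A #_f H`. -/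
def smashMap (u : ConvHom k C A) (φ : C →ₗc[k] H) : ConvHom k C (A ⊗[k] H) :=
  postcomp (inl k A H) u * postcomp (inr k A H) (toConv φ.toLinearMap)

lemma smashMap_apply {ι : Type*} (u : ConvHom k C A) (φ : C →ₗc[k] H) {c : C} (r : Repr k c ι) :
    smashMap u φ c = ∑ i ∈ r.index, u (r.left i) ⊗ₜ φ (r.right i) := by
  rw [smashMap, r.convMul_apply]
  simp

lemma smashMap_const (a : A) (h : H) :
    smashMap (ConvHom.const k H a) (CoalgHom.id k H) h = a ⊗ₜ[k] h := by
  simp only [smashMap_apply _ _ (ℛ k h), ConvHom.const_apply, CoalgHom.id_apply,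
    TensorProduct.smul_tmul]
  rw [← TensorProduct.tmul_sum, sum_counit_smul]

variable [Coalgebra k D]

lemma precomp_smashMap (g : D →ₗc[k] C) (u : ConvHom k C A) (φ : C →ₗc[k] H) :
    precomp g (smashMap u φ) = smashMap (precomp g u) (φ.comp g) :=
  map_mul _ _ _

lemma crossedMul_tmul (a b : A) (h l : H) :
    crossedMul k A H σ f (a ⊗ₜ h) (b ⊗ₜ l) =
      (a ⊗ₜ 1) * (precomp (fst k H H) (postcomp (inl k A H) (actionMap σ b)) *
        smashMap (ofBilin f) (mulCoalgHom k H)) (h ⊗ₜ l) := by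
  rw [smashMap, ← mul_assoc, convMul_tmul _ _ (ℛ k h) (ℛ k l)]
  simp_rw [precomp_fst_mul_tmul _ _ _ (ℛ k _)]
  simp only [crossedMul, TensorProduct.lift.tmul, LinearMap.compl₂_apply, LinearMap.coe_comp,
    Function.comp_apply, LinearMap.llcomp_apply, TensorProduct.curry_apply, LinearEquiv.coe_coe,
    TensorProduct.map_tmul, LinearMap.lTensor_tmul]
  rw [← (ℛ k h).eq, ← (ℛ k l).eq]
  simp only [map_sum, TensorProduct.tmul_sum, TensorProduct.sum_tmul, LinearMap.rTensor_tmul,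
    TensorProduct.assoc_symm_tmul]
  rw [Finset.sum_comm, Finset.mul_sum]
  refine Finset.sum_congr rfl fun i _ => ?_
  rw [Finset.mul_sum]
  refine Finset.sum_congr rfl fun j _ => ?_
  conv_lhs => rw [← (ℛ k ((ℛ k h).left i)).eq]
  simp only [map_sum, TensorProduct.tmul_sum, TensorProduct.sum_tmul, Finset.mul_sum,
    Finset.sum_mul]
  exact Finset.sum_congr rfl fun p _ => by simp

lemma crossedMul_smashMap (u : ConvHom k C A) (φ : C →ₗc[k] H) (v : ConvHom k D A)
    (ψ : D →ₗc[k] H) (c : C) (d : D) :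
    crossedMul k A H σ f (smashMap u φ c) (smashMap v ψ d) =
      smashMap (precomp (fst k C D) u * actionComp σ φ v *
          precomp (Coalgebra.TensorProduct.map φ ψ) (ofBilin f))
        ((mulCoalgHom k H).comp (Coalgebra.TensorProduct.map φ ψ)) (c ⊗ₜ d) := by
  have factor : smashMap (precomp (fst k C D) u * actionComp σ φ v *
        precomp (Coalgebra.TensorProduct.map φ ψ) (ofBilin f))
      ((mulCoalgHom k H).comp (Coalgebra.TensorProduct.map φ ψ)) =
      precomp (fst k C D) (postcomp (inl k A H) u) *
        (postcomp (inl k A H) (actionComp σ φ v) *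
          precomp (Coalgebra.TensorProduct.map φ ψ)
            (smashMap (ofBilin f) (mulCoalgHom k H))) := by
    rw [precomp_smashMap, smashMap, map_mul, map_mul, smashMap, mul_assoc, mul_assoc]
    rfl
  rw [factor, precomp_fst_mul_tmul _ _ _ (ℛ k c), smashMap_apply _ _ (ℛ k c),
    smashMap_apply _ _ (ℛ k d)]
  simp only [map_sum, LinearMap.sum_apply, crossedMul_tmul]
  rw [Finset.sum_comm]
  refine Finset.sum_congr rfl fun i _ => ?_
  rw [convMul_tmul _ _ (ℛ k _) (ℛ k d), Finset.sum_comm, Finset.mul_sum]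
  refine Finset.sum_congr rfl fun j _ => ?_
  have pullback (X : ConvHom k (H ⊗[k] H) (A ⊗[k] H)) (c : C) (d : D) :
    X (φ c ⊗ₜ ψ d) = precomp (Coalgebra.TensorProduct.map φ ψ) X (c ⊗ₜ d) := rfl
  rw [pullback, map_mul, precomp_map_fst, precomp_fst_mul_tmul _ _ _ (ℛ k _)]
  simp

end CrossedMul

section CrossedSystem

variable {k A H : Type*} [CommRing k] [Ring A] [Algebra k A] [Ring H] [HopfAlgebra k H]
  {σ : H →ₗ[k] A →ₗ[k] A} {f finv : H →ₗ[k] H →ₗ[k] A}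

/-- A weak action `σ` together with a map `f` satisfying conditions (i)–(iii), expressed by
identities in convolution algebras instead of Sweedler sums. -/
structure IsCrossedSystem (σ : H →ₗ[k] A →ₗ[k] A) (f : H →ₗ[k] H →ₗ[k] A) : Prop where
  action_mul (a b : A) : actionMap σ (a * b) = actionMap σ a * actionMap σ b
  action_one (h : H) : σ h 1 = counit (R := k) h • (1 : A)
  one_action (a : A) : σ 1 a = a
  cocycle_one (h : H) : f h 1 = counit (R := k) h • (1 : A)
  one_cocycle (h : H) : f 1 h = counit (R := k) h • (1 : A)
  twisted_module (a : A) : actionComp σ (CoalgHom.id k H) (actionMap σ a) * ofBilin f =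
    ofBilin f * precomp (mulCoalgHom k H) (actionMap σ a)
  cocycle : precomp (Coalgebra.TensorProduct.assoc k k H H H).toCoalgHom
      (actionComp σ (CoalgHom.id k H) (ofBilin f) *
        precomp (Coalgebra.TensorProduct.map (CoalgHom.id k H) (mulCoalgHom k H)) (ofBilin f)) =
    precomp (fst k (H ⊗[k] H) H) (ofBilin f) *
      precomp (Coalgebra.TensorProduct.map (mulCoalgHom k H) (CoalgHom.id k H)) (ofBilin f)

section Sweedler

variable {n : H → ℕ} {c₁ c₂ : H → ℕ → H}

/-- The representation of `Δ h` given by a choice of Sweedler components. -/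
def sweedlerRepr (hrep : IsSweedlerRep k H n c₁ c₂) (h : H) : Repr k h ℕ where
  index := Finset.range (n h)
  left := c₁ h
  right := c₂ h
  eq := (hrep h).symm

lemma isCrossedSystem_of_sweedler (hrep : IsSweedlerRep k H n c₁ c₂)
    (hweak : IsWeakAction k A H n c₁ c₂ σ) (hnormal : IsNormal k A H f)
    (hcocycle : IsCocycle k A H n c₁ c₂ σ f) (htwisted : IsTwistedModule k A H n c₁ c₂ σ f) :
    IsCrossedSystem σ f where
  action_mul a b := WithConv.ext <| LinearMap.ext fun h => (hweak.1 h a b).trans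
    ((sweedlerRepr hrep h).convMul_apply (actionMap σ a) (actionMap σ b)).symm
  action_one := hweak.2.1
  one_action := hweak.2.2
  cocycle_one h := (hnormal h).1
  one_cocycle h := (hnormal h).2
  twisted_module a := ConvHom.tensor_ext fun h l => by
    rw [convMul_tmul _ _ (sweedlerRepr hrep h) (sweedlerRepr hrep l),
      convMul_tmul _ _ (sweedlerRepr hrep h) (sweedlerRepr hrep l)]
    exact htwisted h l a
  cocycle := ConvHom.tensor_ext_threefold fun h l m => by
    rw [map_mul, convMul_tmul _ _ ((sweedlerRepr hrep h).tmul (sweedlerRepr hrep l))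
      (sweedlerRepr hrep m), precomp_fst_mul_tmul _ _ _
      ((sweedlerRepr hrep h).tmul (sweedlerRepr hrep l))]
    exact (Finset.sum_product _ _ _).trans <| (hcocycle h l m).trans <|
      Eq.symm (Finset.sum_product _ _ fun x => f (c₁ h x.1) (c₁ l x.2) * f (c₂ h x.1 * c₂ l x.2) m)

lemma convInverse_of_sweedler (hrep : IsSweedlerRep k H n c₁ c₂)
    (hinv : IsConvInverse k A H n c₁ c₂ f finv) :
    ofBilin f * ofBilin finv = 1 ∧ ofBilin finv * ofBilin f = 1 := by
  constructor <;> refine ConvHom.tensor_ext fun h l => ?_ <;>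
    rw [convMul_tmul _ _ (sweedlerRepr hrep h) (sweedlerRepr hrep l)]
  · refine (hinv h l).1.trans ?_
    simp [Algebra.algebraMap_eq_smul_one, mul_smul, mul_comm]
  · refine (hinv h l).2.trans ?_
    simp [Algebra.algebraMap_eq_smul_one, mul_smul, mul_comm]

end Sweedler

lemma actionComp_const (φ : H ⊗[k] H →ₗc[k] H) (a : A) :
    actionComp σ φ (ConvHom.const k H a) =
      precomp (fst k (H ⊗[k] H) H) (precomp φ (actionMap σ a)) :=
  ConvHom.tensor_ext fun x m => by simp

lemma mulCoalgHom_comp_map_assoc :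
    (mulCoalgHom k H).comp (Coalgebra.TensorProduct.map (mulCoalgHom k H) (CoalgHom.id k H)) =
      ((mulCoalgHom k H).comp
        (Coalgebra.TensorProduct.map (CoalgHom.id k H) (mulCoalgHom k H))).comp
        (Coalgebra.TensorProduct.assoc k k H H H).toCoalgHom :=
  CoalgHom.coe_linearMap_injective (TensorProduct.ext_threefold fun h l m => mul_assoc h l m)

namespace IsCrossedSystem

variable (hσf : IsCrossedSystem σ f)

include hσf

lemma actionComp_mul {D : Type*} [AddCommMonoid D] [Module k D] [Coalgebra k D]
    (u v : ConvHom k D A) :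
    actionComp σ (CoalgHom.id k H) (u * v) =
      actionComp σ (CoalgHom.id k H) u * actionComp σ (CoalgHom.id k H) v := by
  refine ConvHom.tensor_ext fun h d => ?_
  rw [convMul_tmul _ _ (ℛ k h) (ℛ k d), actionComp_tmul, (ℛ k d).convMul_apply, Finset.sum_comm,
    map_sum]
  refine Finset.sum_congr rfl fun i _ => ?_
  have pointwise := congrArg (fun w : ConvHom k H A => w h)
    (hσf.action_mul (u ((ℛ k d).left i)) (v ((ℛ k d).right i)))
  rwa [(ℛ k h).convMul_apply] at pointwise

lemma actionMap_one : actionMap σ 1 = 1 :=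
  WithConv.ext <| LinearMap.ext fun h => by simp [hσf.action_one, Algebra.algebraMap_eq_smul_one]

lemma assoc_coefficient (a b c : A) :
    precomp (fst k (H ⊗[k] H) H) (precomp (fst k H H) (ConvHom.const k H a) *
          actionComp σ (CoalgHom.id k H) (ConvHom.const k H b) * ofBilin f) *
        actionComp σ (mulCoalgHom k H) (ConvHom.const k H c) *
        precomp (Coalgebra.TensorProduct.map (mulCoalgHom k H) (CoalgHom.id k H)) (ofBilin f) =
      precomp (Coalgebra.TensorProduct.assoc k k H H H).toCoalgHom
        (precomp (fst k H (H ⊗[k] H)) (ConvHom.const k H a) *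
          actionComp σ (CoalgHom.id k H) (precomp (fst k H H) (ConvHom.const k H b) *
            actionComp σ (CoalgHom.id k H) (ConvHom.const k H c) * ofBilin f) *
          precomp (Coalgebra.TensorProduct.map (CoalgHom.id k H) (mulCoalgHom k H))
            (ofBilin f)) := by
  have action_const (a : A) : actionComp σ (CoalgHom.id k H) (ConvHom.const k H a) =
      precomp (fst k H H) (actionMap σ a) := ConvHom.tensor_ext fun h l => by simp
  have action_fst_const : actionComp σ (CoalgHom.id k H) (precomp (fst k H H)
      (ConvHom.const k H b)) = precomp (fst k H (H ⊗[k] H)) (actionMap σ b) := by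
    ext h l m
    simp [mul_smul]
  have assoc_fst (u : ConvHom k H A) : precomp (Coalgebra.TensorProduct.assoc k k H H H).toCoalgHom
      (precomp (fst k H (H ⊗[k] H)) u) = precomp (fst k (H ⊗[k] H) H) (precomp (fst k H H) u) :=
    ConvHom.tensor_ext_threefold fun h l m => by simp [mul_smul]
  have assoc_action : precomp (Coalgebra.TensorProduct.assoc k k H H H).toCoalgHom
      (actionComp σ (CoalgHom.id k H) (precomp (fst k H H) (actionMap σ c))) =
      precomp (fst k (H ⊗[k] H) H) (actionComp σ (CoalgHom.id k H) (actionMap σ c)) :=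
    ConvHom.tensor_ext_threefold fun h l m => by simp
  have twisted := congrArg (precomp (fst k (H ⊗[k] H) H)) (hσf.twisted_module c)
  have cocycle := hσf.cocycle
  simp only [map_mul] at twisted cocycle
  simp only [action_const, actionComp_const, hσf.actionComp_mul, action_fst_const, map_mul,
    assoc_fst, assoc_action, mul_assoc]
  rw [cocycle, ← mul_assoc (precomp _ (actionComp σ _ (actionMap σ c))), twisted, mul_assoc]

lemma crossedMul_assoc_tmul (a b c : A) (h l m : H) :
    crossedMul k A H σ f (crossedMul k A H σ f (a ⊗ₜ h) (b ⊗ₜ l)) (c ⊗ₜ m) =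
      crossedMul k A H σ f (a ⊗ₜ h) (crossedMul k A H σ f (b ⊗ₜ l) (c ⊗ₜ m)) := by
  have map_id : Coalgebra.TensorProduct.map (CoalgHom.id k H) (CoalgHom.id k H) =
      CoalgHom.id k (H ⊗[k] H) := CoalgHom.coe_linearMap_injective TensorProduct.map_id
  have precomp_id (u : ConvHom k (H ⊗[k] H) A) : precomp (CoalgHom.id k (H ⊗[k] H)) u = u := rfl
  have reassociate (w : ConvHom k (H ⊗[k] (H ⊗[k] H)) (A ⊗[k] H)) : w (h ⊗ₜ (l ⊗ₜ m)) =
      precomp (Coalgebra.TensorProduct.assoc k k H H H).toCoalgHom w (h ⊗ₜ l ⊗ₜ m) := rfl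
  rw [← smashMap_const a h, ← smashMap_const b l, ← smashMap_const c m]
  simp only [crossedMul_smashMap, map_id, precomp_id, CoalgHom.comp_id]
  rw [reassociate, precomp_smashMap, ← mulCoalgHom_comp_map_assoc]
  exact congrArg (fun u => smashMap u _ (h ⊗ₜ l ⊗ₜ m)) (hσf.assoc_coefficient a b c)

lemma crossedMul_assoc (x y z : A ⊗[k] H) :
    crossedMul k A H σ f (crossedMul k A H σ f x y) z =
      crossedMul k A H σ f x (crossedMul k A H σ f y z) := by
  induction x with
  | zero => simp
  | add x x' hx hx' => simp only [map_add, LinearMap.add_apply, hx, hx']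
  | tmul a h =>
    induction y with
    | zero => simp
    | add y y' hy hy' => simp only [map_add, LinearMap.add_apply, hy, hy']
    | tmul b l =>
      induction z with
      | zero => simp
      | add z z' hz hz' => simp only [map_add, hz, hz']
      | tmul c m => exact hσf.crossedMul_assoc_tmul a b c h l m

end IsCrossedSystem
end CrossedSystem

section CrossedProductRing

variable {k A H : Type*} [CommRing k] [Ring A] [Algebra k A] [Ring H] [HopfAlgebra k H]
  {σ : H →ₗ[k] A →ₗ[k] A} {f finv : H →ₗ[k] H →ₗ[k] A}

variable (k H) in
/-- The representation `Δ 1 = 1 ⊗ 1`. -/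
@[simps] def reprOne : Repr k (1 : H) Unit where
  index := {()}
  left _ := 1
  right _ := 1
  eq := by simp [Algebra.TensorProduct.one_def]

namespace IsCrossedSystem

section Unit

variable (hσf : IsCrossedSystem σ f)

include hσf

lemma smashMap_one_tmul (l : H) :
    smashMap (ofBilin f) (mulCoalgHom k H) (1 ⊗ₜ l) = (1 : A) ⊗ₜ[k] l := by
  rw [smashMap, convMul_tmul _ _ (reprOne k H) (ℛ k l)]
  conv_rhs => rw [← sum_counit_smul (ℛ k l)]
  simp [hσf.one_cocycle, TensorProduct.tmul_sum, TensorProduct.smul_tmul']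

lemma smashMap_tmul_one (l : H) :
    smashMap (ofBilin f) (mulCoalgHom k H) (l ⊗ₜ 1) = (1 : A) ⊗ₜ[k] l := by
  rw [smashMap, convMul_tmul _ _ (ℛ k l) (reprOne k H)]
  conv_rhs => rw [← sum_counit_smul (ℛ k l)]
  simp [hσf.cocycle_one, TensorProduct.tmul_sum, TensorProduct.smul_tmul']

lemma crossedMul_tmul_one_left (a : A) (x : A ⊗[k] H) :
    crossedMul k A H σ f (a ⊗ₜ 1) x = (a ⊗ₜ 1) * x := by
  induction x with
  | zero => simp
  | add x y hx hy => simp only [map_add, mul_add, hx, hy]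
  | tmul b l =>
    rw [crossedMul_tmul, precomp_fst_mul_tmul _ _ _ (reprOne k H)]
    simp [hσf.smashMap_one_tmul, hσf.one_action]

lemma crossedMul_gamma_gamma (h l : H) :
    crossedMul k A H σ f (1 ⊗ₜ h) (1 ⊗ₜ l) =
      smashMap (ofBilin f) (mulCoalgHom k H) (h ⊗ₜ l) := by
  rw [crossedMul_tmul, hσf.actionMap_one, map_one, map_one, one_mul,
    ← Algebra.TensorProduct.one_def, one_mul]

lemma crossedMul_one (x : A ⊗[k] H) : crossedMul k A H σ f x (1 ⊗ₜ 1) = x := by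
  induction x with
  | zero => simp
  | add x y hx hy => simp only [map_add, LinearMap.add_apply, hx, hy]
  | tmul a h =>
    rw [crossedMul_tmul, hσf.actionMap_one, map_one, map_one, one_mul, hσf.smashMap_tmul_one]
    simp

lemma one_crossedMul (x : A ⊗[k] H) : crossedMul k A H σ f (1 ⊗ₜ 1) x = x := by
  rw [hσf.crossedMul_tmul_one_left, ← Algebra.TensorProduct.one_def, one_mul]

end Unit

/-- The crossed product `E = A #_f H`: the module `A ⊗ H` carrying the multiplication
`crossedMul`. -/
def CrossedProduct (_ : IsCrossedSystem σ f) : Type _ := A ⊗[k] H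

variable (hσf : IsCrossedSystem σ f)

instance : AddCommGroup hσf.CrossedProduct := inferInstanceAs (AddCommGroup (A ⊗[k] H))

instance : Module k hσf.CrossedProduct := inferInstanceAs (Module k (A ⊗[k] H))

instance : Ring hσf.CrossedProduct where
  __ := (inferInstance : AddCommGroup hσf.CrossedProduct)
  mul x y := crossedMul k A H σ f x y
  one := (1 : A) ⊗ₜ[k] (1 : H)
  left_distrib x y z := map_add (crossedMul k A H σ f x) y z
  right_distrib x y z := LinearMap.map_add₂ (crossedMul k A H σ f) x y z
  zero_mul x := LinearMap.map_zero₂ (crossedMul k A H σ f) x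
  mul_zero x := map_zero (crossedMul k A H σ f x)
  mul_assoc := hσf.crossedMul_assoc
  one_mul := hσf.one_crossedMul
  mul_one := hσf.crossedMul_one

instance : Algebra k hσf.CrossedProduct :=
  Algebra.ofModule (fun c x y => LinearMap.map_smul₂ (crossedMul k A H σ f) c x y)
    (fun c x y => map_smul (crossedMul k A H σ f x) c y)

/-- The inclusion `a ↦ a # 1` of `A` in the crossed product. -/
def incl : A →ₐ[k] hσf.CrossedProduct :=
  AlgHom.ofLinearMap ((TensorProduct.mk k A H).flip 1) rfl fun a b =>
    (map_mul (inl k A H) a b).trans (hσf.crossedMul_tmul_one_left a (b ⊗ₜ[k] (1 : H))).symm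

/-- The map `γ(h) = 1 # h` with values in the crossed product. -/
def gamma : ConvHom k H hσf.CrossedProduct := toConv (gam k A H)

lemma gamma_one : hσf.gamma 1 = 1 := rfl

lemma incl_mul_gamma (a : A) (h : H) : hσf.incl a * hσf.gamma h = a ⊗ₜ[k] h :=
  (hσf.crossedMul_tmul_one_left a ((1 : A) ⊗ₜ[k] h)).trans (by simp)

lemma gamma_mul_gamma :
    precomp (fst k H H) hσf.gamma * precomp (snd k H H) hσf.gamma =
      postcomp hσf.incl (ofBilin f) * precomp (mulCoalgHom k H) hσf.gamma := by
  refine ConvHom.tensor_ext fun h l => ?_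
  rw [precomp_fst_mul_precomp_snd, convMul_tmul _ _ (ℛ k h) (ℛ k l)]
  refine (hσf.crossedMul_gamma_gamma h l).trans ?_
  rw [smashMap, convMul_tmul _ _ (ℛ k h) (ℛ k l)]
  refine Finset.sum_congr rfl fun i _ => Finset.sum_congr rfl fun j _ => ?_
  exact Eq.trans (by simp) (hσf.incl_mul_gamma _ _).symm

end IsCrossedSystem
end CrossedProductRing

section Antipode

variable {k H B : Type*} [CommSemiring k] [Semiring H] [HopfAlgebra k H] [Semiring B]
  [Algebra k B]

variable (k H) in
/-- The antipode as an element of the convolution algebra `Hom_k(H, H)`. -/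
abbrev antipodeConv : ConvHom k H H := toConv (antipode k)

variable (k H) in
/-- The identity map as an element of the convolution algebra `Hom_k(H, H)`. -/
abbrev idConv : ConvHom k H H := toConv LinearMap.id

lemma postcomp_comul_id :
    postcomp (comulAlgHom k H) (idConv k H) =
      postcomp (inl k H H) (idConv k H) * postcomp (inr k H H) (idConv k H) := by
  refine WithConv.ext (LinearMap.ext fun h => ?_)
  refine Eq.trans ?_ ((ℛ k h).convMul_apply _ _).symm
  simpa using (ℛ k h).eq.symm

-- Both sides are convolution inverse to the comultiplication.
lemma postcomp_comul_antipode :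
    postcomp (comulAlgHom k H) (antipodeConv k H) =
      postcomp (inr k H H) (antipodeConv k H) * postcomp (inl k H H) (antipodeConv k H) := by
  refine (left_inv_eq_right_inv (a := postcomp (comulAlgHom k H) (idConv k H)) ?_ ?_).symm
  · rw [postcomp_comul_id, mul_assoc, ← mul_assoc (postcomp (inl k H H) (antipodeConv k H)),
      ← map_mul, LinearMap.antipode_mul_id, map_one, one_mul, ← map_mul,
      LinearMap.antipode_mul_id, map_one]
  · rw [← map_mul, LinearMap.id_mul_antipode, map_one]

lemma comulAlgHom_comp_inl :
    (comulAlgHom k (H ⊗[k] H)).comp (inl k H H) =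
      (Algebra.TensorProduct.map (inl k H H) (inl k H H)).comp (comulAlgHom k H) := by
  ext h
  simp only [AlgHom.comp_apply, comulAlgHom_apply, Algebra.TensorProduct.includeLeft_apply,
    TensorProduct.comul_tmul, comul_one, Algebra.TensorProduct.one_def]
  rw [← (ℛ k h).eq]
  simp [TensorProduct.sum_tmul]

lemma comulAlgHom_comp_inr :
    (comulAlgHom k (H ⊗[k] H)).comp (inr k H H) =
      (Algebra.TensorProduct.map (inr k H H) (inr k H H)).comp (comulAlgHom k H) := by
  ext h
  simp only [AlgHom.comp_apply, comulAlgHom_apply, Algebra.TensorProduct.includeRight_apply,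
    TensorProduct.comul_tmul, comul_one, Algebra.TensorProduct.one_def]
  rw [← (ℛ k h).eq]
  simp [TensorProduct.tmul_sum]

variable (k H) in
/-- The map `y ↦ S(y⁽¹⁾) ⊗ y⁽²⁾`. -/
def antipodeTmulId : ConvHom k H (H ⊗[k] H) :=
  postcomp (inl k H H) (antipodeConv k H) * postcomp (inr k H H) (idConv k H)

variable (k H) in
/-- The map `y ↦ y⁽¹⁾ ⊗ S(y⁽²⁾)`. -/
def idTmulAntipode : ConvHom k H (H ⊗[k] H) :=
  postcomp (inl k H H) (idConv k H) * postcomp (inr k H H) (antipodeConv k H)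

lemma antipodeTmulId_apply {ι : Type*} {y : H} (r : Repr k y ι) :
    antipodeTmulId k H y = ∑ i ∈ r.index, antipode k (r.left i) ⊗ₜ r.right i := by
  rw [antipodeTmulId, r.convMul_apply]
  simp

lemma idTmulAntipode_apply {ι : Type*} {y : H} (r : Repr k y ι) :
    idTmulAntipode k H y = ∑ i ∈ r.index, r.left i ⊗ₜ antipode k (r.right i) := by
  rw [idTmulAntipode, r.convMul_apply]
  simp

lemma comul_antipodeTmulId :
    postcomp (comulAlgHom k (H ⊗[k] H)) (antipodeTmulId k H) =
      postcomp ((inr k _ _).comp (inl k H H)) (antipodeConv k H) *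
        (postcomp (inl k _ _) (antipodeTmulId k H) *
          postcomp ((inr k _ _).comp (inr k H H)) (idConv k H)) := by
  have hinl := congrArg (postcomp (Algebra.TensorProduct.map (inl k H H) (inl k H H)))
    (postcomp_comul_antipode (k := k) (H := H))
  have hinr := congrArg (postcomp (Algebra.TensorProduct.map (inr k H H) (inr k H H)))
    (postcomp_comul_id (k := k) (H := H))
  rw [antipodeTmulId, map_mul, map_mul]
  simp only [map_mul, ← postcomp_comp, comulAlgHom_comp_inl, comulAlgHom_comp_inr,
    Algebra.TensorProduct.map_comp_includeLeft, Algebra.TensorProduct.map_comp_includeRight]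
    at hinl hinr ⊢
  rw [hinl, hinr]
  simp only [mul_assoc]

lemma comul_idTmulAntipode :
    postcomp (comulAlgHom k (H ⊗[k] H)) (idTmulAntipode k H) =
      postcomp ((inl k _ _).comp (inl k H H)) (idConv k H) *
        (postcomp (inr k _ _) (idTmulAntipode k H) *
          postcomp ((inl k _ _).comp (inr k H H)) (antipodeConv k H)) := by
  have hinl := congrArg (postcomp (Algebra.TensorProduct.map (inl k H H) (inl k H H)))
    (postcomp_comul_id (k := k) (H := H))
  have hinr := congrArg (postcomp (Algebra.TensorProduct.map (inr k H H) (inr k H H)))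
    (postcomp_comul_antipode (k := k) (H := H))
  rw [idTmulAntipode, map_mul, map_mul]
  simp only [map_mul, ← postcomp_comp, comulAlgHom_comp_inl, comulAlgHom_comp_inr,
    Algebra.TensorProduct.map_comp_includeLeft, Algebra.TensorProduct.map_comp_includeRight]
    at hinl hinr ⊢
  rw [hinl, hinr]
  simp only [mul_assoc]

lemma convMul_antipodeTmulId_apply (u v : ConvHom k (H ⊗[k] H) B) (y : H) :
    (u * v) (antipodeTmulId k H y) =
      ∑ i ∈ (ℛ k y).index, ∑ j ∈ (ℛ k ((ℛ k y).right i)).index,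
        u (antipodeTmulId k H ((ℛ k ((ℛ k y).right i)).left j)) *
          v (antipode k ((ℛ k y).left i) ⊗ₜ (ℛ k ((ℛ k y).right i)).right j) := by
  have hcomul := LinearMap.congr_fun (congrArg ofConv (comul_antipodeTmulId (k := k) (H := H))) y
  rw [postcomp_apply, comulAlgHom_apply, (ℛ k y).convMul_apply] at hcomul
  rw [LinearMap.convMul_apply, hcomul, map_sum, map_sum]
  refine Finset.sum_congr rfl fun i _ => ?_
  rw [(ℛ k ((ℛ k y).right i)).convMul_apply, Finset.mul_sum, map_sum, map_sum]
  refine Finset.sum_congr rfl fun j _ => ?_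
  simp

lemma convMul_idTmulAntipode_apply (u v : ConvHom k (H ⊗[k] H) B) (y : H) :
    (u * v) (idTmulAntipode k H y) =
      ∑ i ∈ (ℛ k y).index, ∑ j ∈ (ℛ k ((ℛ k y).right i)).index,
        u ((ℛ k y).left i ⊗ₜ antipode k ((ℛ k ((ℛ k y).right i)).right j)) *
          v (idTmulAntipode k H ((ℛ k ((ℛ k y).right i)).left j)) := by
  have hcomul := LinearMap.congr_fun (congrArg ofConv (comul_idTmulAntipode (k := k) (H := H))) y
  rw [postcomp_apply, comulAlgHom_apply, (ℛ k y).convMul_apply] at hcomul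
  rw [LinearMap.convMul_apply, hcomul, map_sum, map_sum]
  refine Finset.sum_congr rfl fun i _ => ?_
  rw [(ℛ k ((ℛ k y).right i)).convMul_apply, Finset.mul_sum, map_sum, map_sum]
  refine Finset.sum_congr rfl fun j _ => ?_
  simp

lemma pullback_antipodeTmulId_mul {u : ConvHom k (H ⊗[k] H) B} {v w : ConvHom k H B}
    (huv : ∀ x h, Commute (u x) (v h)) :
    pullback (antipodeTmulId k H).ofConv (u * (precomp (fst k H H) v * precomp (snd k H H) w)) =
      pullback (antipode k) v * (pullback (antipodeTmulId k H).ofConv u * w) := by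
  refine WithConv.ext (LinearMap.ext fun y => (convMul_antipodeTmulId_apply _ _ y).trans ?_)
  refine Eq.trans ?_ ((ℛ k y).convMul_apply _ _).symm
  refine Finset.sum_congr rfl fun i _ => ?_
  rw [(ℛ k ((ℛ k y).right i)).convMul_apply, Finset.mul_sum]
  refine Finset.sum_congr rfl fun j _ => ?_
  rw [precomp_fst_mul_precomp_snd, ← mul_assoc, ← mul_assoc, (huv _ _).eq]
  rfl

lemma pullback_antipodeTmulId_precomp_mulCoalgHom {w : ConvHom k H B} (hw : w 1 = 1) :
    pullback (antipodeTmulId k H).ofConv (precomp (mulCoalgHom k H) w) = 1 := by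
  refine WithConv.ext (LinearMap.ext fun y => ?_)
  change w (mulCoalgHom k H (antipodeTmulId k H y)) = _
  have hmul : mulCoalgHom k H (antipodeTmulId k H y) = counit (R := k) y • 1 := by
    rw [antipodeTmulId_apply (ℛ k y), map_sum, ← sum_antipode_mul_eq_smul (ℛ k y)]
    rfl
  rw [hmul, map_smul, hw, LinearMap.convOne_def]
  exact (Algebra.algebraMap_eq_smul_one _).symm

lemma pullback_idTmulAntipode_precomp_fst_mul_precomp_snd (v w : ConvHom k H B) :
    pullback (idTmulAntipode k H).ofConv (precomp (fst k H H) v * precomp (snd k H H) w) =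
      v * pullback (antipode k) w := by
  refine WithConv.ext (LinearMap.ext fun y => ?_)
  refine Eq.trans ?_ ((ℛ k y).convMul_apply _ _).symm
  change (_ * _ : ConvHom k _ B) (idTmulAntipode k H y) = _
  rw [idTmulAntipode_apply (ℛ k y), map_sum]
  exact Finset.sum_congr rfl fun i _ => precomp_fst_mul_precomp_snd ..

lemma pullback_idTmulAntipode_mul_precomp_mulCoalgHom (u : ConvHom k (H ⊗[k] H) B)
    {w : ConvHom k H B} (hw : w 1 = 1) :
    pullback (idTmulAntipode k H).ofConv (u * precomp (mulCoalgHom k H) w) =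
      pullback (idTmulAntipode k H).ofConv u := by
  have hmul (z : H) : mulCoalgHom k H (idTmulAntipode k H z) = counit (R := k) z • 1 := by
    rw [idTmulAntipode_apply (ℛ k z), map_sum, ← sum_mul_antipode_eq_smul (ℛ k z)]
    rfl
  refine WithConv.ext (LinearMap.ext fun y => (convMul_idTmulAntipode_apply _ _ y).trans ?_)
  change _ = u (idTmulAntipode k H y)
  rw [idTmulAntipode_apply (ℛ k y), map_sum]
  refine Finset.sum_congr rfl fun i _ => ?_
  conv_rhs => rw [← sum_counit_smul (ℛ k ((ℛ k y).right i))]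
  simp only [map_sum, TensorProduct.tmul_sum, map_smul, TensorProduct.tmul_smul, precomp_apply,
    hmul, hw, mul_smul_comm, mul_one]

end Antipode

section GammaInverse

variable {k A H : Type*} [CommRing k] [Ring A] [Algebra k A] [Ring H] [HopfAlgebra k H]
  {σ : H →ₗ[k] A →ₗ[k] A} {f finv : H →ₗ[k] H →ₗ[k] A}

namespace IsCrossedSystem

section Gamma

variable (hσf : IsCrossedSystem σ f)

lemma gamma_mul_pullback_antipode :
    hσf.gamma * pullback (antipode k) hσf.gamma =
      postcomp hσf.incl (pullback (idTmulAntipode k H).ofConv (ofBilin f)) := by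
  rw [← pullback_idTmulAntipode_precomp_fst_mul_precomp_snd, gamma_mul_gamma,
    pullback_idTmulAntipode_mul_precomp_mulCoalgHom _ hσf.gamma_one]
  rfl

/-- The map `id ⊗ ε : A #_f H → A`. -/
def counitRight : hσf.CrossedProduct →ₗ[k] A :=
  show A ⊗[k] H →ₗ[k] A from
    (TensorProduct.rid k A).toLinearMap ∘ₗ LinearMap.lTensor A (counit (R := k))

lemma counitRight_incl_mul_gamma (a : A) (h : H) :
    hσf.counitRight (hσf.incl a * hσf.gamma h) = counit (R := k) h • a := by
  rw [incl_mul_gamma]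
  rfl

lemma eq_one_of_postcomp_incl_mul_gamma {u : ConvHom k H A}
    (hu : postcomp hσf.incl u * hσf.gamma = hσf.gamma) : u = 1 := by
  refine WithConv.ext (LinearMap.ext fun h => ?_)
  have hcounit := congrArg (fun w : ConvHom k H _ => hσf.counitRight (w h)) hu
  simp only [(ℛ k h).convMul_apply, map_sum, postcomp_apply, counitRight_incl_mul_gamma]
    at hcounit
  rw [← one_mul (hσf.gamma h), ← map_one hσf.incl, counitRight_incl_mul_gamma] at hcounit
  rw [LinearMap.convOne_def]
  refine Eq.trans ?_ (hcounit.trans (Algebra.algebraMap_eq_smul_one _).symm)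
  conv_lhs => rw [← sum_right_counit_smul (ℛ k h)]
  simp

end Gamma

/-- The cocycle of a crossed product takes central values, and `finv` is its convolution
inverse. -/
structure IsCentralCocycle (hσf : IsCrossedSystem σ f) (finv : H →ₗ[k] H →ₗ[k] A) : Prop where
  commute_incl (e : hσf.CrossedProduct) (x : H ⊗[k] H) : Commute e (hσf.incl (ofBilin f x))
  mul_inv : ofBilin f * ofBilin finv = 1
  inv_mul : ofBilin finv * ofBilin f = 1

/-- The map `γ⁻¹(h) = f⁻¹(S(h⁽²⁾), h⁽³⁾) # S(h⁽¹⁾)` with values in the crossed product. -/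
def gammaConvInv (hσf : IsCrossedSystem σ f) (finv : H →ₗ[k] H →ₗ[k] A) :
    ConvHom k H hσf.CrossedProduct :=
  toConv (gammaInv k A H finv)

namespace IsCentralCocycle

variable {hσf : IsCrossedSystem σ f} (hf : hσf.IsCentralCocycle finv)

include hf

lemma commute_incl_inv (e : hσf.CrossedProduct) (x : H ⊗[k] H) :
    Commute e (hσf.incl (ofBilin finv x)) :=
  commute_apply_of_convInverse (u := postcomp hσf.incl (ofBilin f))
    (v := postcomp hσf.incl (ofBilin finv)) (by rw [← map_mul, hf.mul_inv, map_one])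
    (by rw [← map_mul, hf.inv_mul, map_one]) (hf.commute_incl e) x

lemma gammaConvInv_eq :
    hσf.gammaConvInv finv = pullback (antipode k) hσf.gamma *
      postcomp hσf.incl (pullback (antipodeTmulId k H).ofConv (ofBilin finv)) := by
  refine WithConv.ext (LinearMap.ext fun h => ?_)
  refine Eq.trans ?_ ((ℛ k h).convMul_apply _ _).symm
  change gammaInv k A H finv h = _
  simp only [pullback_apply, postcomp_apply, (hf.commute_incl_inv _ _).eq, incl_mul_gamma]
  rw [gammaInv, LinearMap.comp_apply, LinearMap.comp_apply, LinearMap.comp_apply, ← (ℛ k h).eq]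
  simp only [map_sum]
  refine Finset.sum_congr rfl fun i _ => ?_
  rw [antipodeTmulId_apply (ℛ k _), LinearMap.lTensor_tmul, ← (ℛ k ((ℛ k h).right i)).eq]
  simp [TensorProduct.tmul_sum, TensorProduct.sum_tmul]

lemma gammaConvInv_mul_gamma : hσf.gammaConvInv finv * hσf.gamma = 1 := by
  have solve_gamma : precomp (mulCoalgHom k H) hσf.gamma = postcomp hσf.incl (ofBilin finv) *
      (precomp (fst k H H) hσf.gamma * precomp (snd k H H) hσf.gamma) := by
    rw [gamma_mul_gamma, ← mul_assoc, ← map_mul, hf.inv_mul, map_one, one_mul]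
  rw [← pullback_antipodeTmulId_precomp_mulCoalgHom hσf.gamma_one, solve_gamma,
    pullback_antipodeTmulId_mul fun x h => (hf.commute_incl_inv _ x).symm, hf.gammaConvInv_eq,
    mul_assoc]
  rfl

lemma gamma_mul_gammaConvInv : hσf.gamma * hσf.gammaConvInv finv = 1 := by
  have mem_incl : hσf.gamma * hσf.gammaConvInv finv = postcomp hσf.incl
      (pullback (idTmulAntipode k H).ofConv (ofBilin f) *
        pullback (antipodeTmulId k H).ofConv (ofBilin finv)) := by
    rw [hf.gammaConvInv_eq, ← mul_assoc, gamma_mul_pullback_antipode, map_mul]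
  rw [mem_incl]
  refine (congrArg _ (hσf.eq_one_of_postcomp_incl_mul_gamma ?_)).trans (map_one _)
  rw [← mem_incl, mul_assoc, hf.gammaConvInv_mul_gamma, mul_one]

lemma gammaConvInv_mul_gammaConvInv :
    precomp (snd k H H) (hσf.gammaConvInv finv) * precomp (fst k H H) (hσf.gammaConvInv finv) *
        postcomp hσf.incl (ofBilin f) =
      precomp (mulCoalgHom k H) (hσf.gammaConvInv finv) := by
  refine left_inv_eq_right_inv (a := precomp (mulCoalgHom k H) hσf.gamma) ?_ ?_
  · rw [mul_assoc, ← gamma_mul_gamma, mul_assoc, ← mul_assoc (precomp (fst k H H) _), ← map_mul,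
      hf.gammaConvInv_mul_gamma, map_one, one_mul, ← map_mul, hf.gammaConvInv_mul_gamma, map_one]
  · rw [← map_mul, hf.gamma_mul_gammaConvInv, map_one]

lemma gammaConvInv_one : hσf.gammaConvInv finv 1 = 1 := by
  have h := congrArg (evalOne k _ H) hf.gammaConvInv_mul_gamma
  rwa [map_mul, map_one, evalOne_apply, evalOne_apply, gamma_one, mul_one] at h

end IsCentralCocycle
end IsCrossedSystem
end GammaInverse

section TwistedMultiplicativity

variable {k B B' H : Type*} [CommSemiring k] [Semiring B] [Algebra k B] [Semiring B']
  [Algebra k B'] [Semiring H] [Bialgebra k H]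

/-- `u` is multiplicative up to the twist `F` on the left and `G` on the right:
`u(l⁽¹⁾) u(h⁽¹⁾) G(l⁽²⁾, h⁽²⁾) = F(l⁽¹⁾, h⁽¹⁾) u(l⁽²⁾h⁽²⁾)`. -/
def IsTwistedMul (F G : ConvHom k (H ⊗[k] H) B) (u : ConvHom k H B) : Prop :=
  precomp (fst k H H) u * precomp (snd k H H) u * G = F * precomp (mulCoalgHom k H) u

/-- Every value of `u` commutes with every value of `v`. -/
def ValuesCommute (u v : ConvHom k H B) : Prop := ∀ h l, Commute (u h) (v l)

lemma ValuesCommute.symm {u v : ConvHom k H B} (huv : ValuesCommute u v) : ValuesCommute v u :=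
  fun h l => (huv l h).symm

lemma ValuesCommute.mul_left {u v w : ConvHom k H B} (hu : ValuesCommute u w)
    (hv : ValuesCommute v w) : ValuesCommute (u * v) w := fun h l =>
  (commute_const_iff.mp ((commute_const_iff.mpr fun c => (hu c l).symm).mul_right
    (commute_const_iff.mpr fun c => (hv c l).symm)) h).symm

lemma ValuesCommute.list_prod_right {u : ConvHom k H B} {L : List (ConvHom k H B)}
    (h : ∀ v ∈ L, ValuesCommute u v) : ValuesCommute u L.prod := fun c =>
  commute_const_iff.mp (Commute.list_prod_right _ _ fun v hv => commute_const_iff.mpr (h v hv c))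

namespace IsTwistedMul

variable {F G K : ConvHom k (H ⊗[k] H) B} {u v : ConvHom k H B}

lemma map (hu : IsTwistedMul F G u) (φ : B →ₐ[k] B') :
    IsTwistedMul (postcomp φ F) (postcomp φ G) (postcomp φ u) := by
  have h := congrArg (postcomp φ) hu
  simp only [map_mul] at h
  exact h

lemma one : IsTwistedMul F F (1 : ConvHom k H B) := by
  rw [IsTwistedMul, map_one, map_one, map_one, one_mul, one_mul, mul_one]

lemma mul (hu : IsTwistedMul F G u) (hv : IsTwistedMul G K v) (huv : ValuesCommute u v) :
    IsTwistedMul F K (u * v) := by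
  have swap := (commute_precomp_fst_precomp_snd huv.symm).eq
  unfold IsTwistedMul at hu hv ⊢
  simp only [map_mul]
  calc precomp (fst k H H) u * precomp (fst k H H) v *
        (precomp (snd k H H) u * precomp (snd k H H) v) * K
      = precomp (fst k H H) u * (precomp (fst k H H) v * precomp (snd k H H) u) *
          precomp (snd k H H) v * K := by simp only [mul_assoc]
    _ = precomp (fst k H H) u * precomp (snd k H H) u *
          (precomp (fst k H H) v * precomp (snd k H H) v * K) := by
        rw [swap]; simp only [mul_assoc]
    _ = F * (precomp (mulCoalgHom k H) u * precomp (mulCoalgHom k H) v) := by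
        rw [hv, ← mul_assoc, hu, mul_assoc]

lemma list_prod {L : List (ConvHom k H B)} (hL : ∀ w ∈ L, IsTwistedMul F F w)
    (hcomm : L.Pairwise ValuesCommute) : IsTwistedMul F F L.prod := by
  induction L with
  | nil => exact one
  | cons w L ih =>
    obtain ⟨hw, hL⟩ := List.forall_mem_cons.mp hL
    obtain ⟨hwL, hcomm⟩ := List.pairwise_cons.mp hcomm
    exact hw.mul (ih hL hcomm) (ValuesCommute.list_prod_right hwL)

lemma apply_mul (hu : IsTwistedMul 1 1 u) (l h : H) : u (l * h) = u l * u h := by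
  rw [IsTwistedMul, mul_one, one_mul] at hu
  exact (LinearMap.congr_fun (congrArg ofConv hu.symm) (l ⊗ₜ h)).trans
    (precomp_fst_mul_precomp_snd u u l h)

end IsTwistedMul
end TwistedMultiplicativity

section QuotientOperators

variable {k V : Type*} [CommRing k] [AddCommGroup V] [Module k V]

/-- The subalgebra of the endomorphisms of `V` which preserve the submodule `p`. -/
def endStabilizer (p : Submodule k V) : Subalgebra k (Module.End k V) :=
  (p.compatibleMaps p).toSubalgebra (fun _ hv => hv) fun _ _ hφ hψ _ hv => hφ (hψ hv)

/-- The action on `V ⧸ p` of the endomorphisms of `V` which preserve `p`. -/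
def quotientEnd (p : Submodule k V) : endStabilizer p →ₐ[k] Module.End k (V ⧸ p) :=
  AlgHom.ofLinearMap (p.mapQLinear p) (p.mapQ_id) fun φ ψ =>
    p.mapQ_comp p p ψ.1 φ.1 ψ.2 φ.2 fun _ hv => φ.2 (ψ.2 hv)

lemma mem_endStabilizer_span_singleton {v : V} {φ : Module.End k V} {c : k} (h : φ v = c • v) :
    φ ∈ endStabilizer (Submodule.span k {v}) :=
  (Submodule.span_singleton_le_iff_mem _ _).mpr <|
    Submodule.mem_comap.mpr <| Submodule.mem_span_singleton.mpr ⟨c, h.symm⟩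

end QuotientOperators

section TensorOperators

lemma prod_ofFn_mulSingle {M : Type*} [Monoid M] {r : ℕ} (g : Fin r → M) :
    (List.ofFn fun i => (Pi.mulSingle i (g i) : Fin r → M)).prod = g := by
  funext j
  refine (map_list_prod (Pi.evalMonoidHom (fun _ => M) j) _).trans ?_
  rw [List.ofFn_eq_map, List.map_map, List.prod_map_eq_pow_single j,
    List.count_eq_one_of_mem (List.nodup_finRange r) (List.mem_finRange j)]
  · simp
  · intro i hij _
    simp [Pi.mulSingle_eq_of_ne hij.symm]

variable {k V : Type*} [CommSemiring k] [AddCommMonoid V] [Module k V] {r : ℕ}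

/-- The action of the endomorphisms of `V` on the `i`-th factor of `V^{⊗ r}`. -/
def factorEnd (i : Fin r) : Module.End k V →ₐ[k] Module.End k (⨂[k]^r V) :=
  let toMonoidHom := PiTensorProduct.mapMonoidHom.comp
    (MonoidHom.mulSingle (fun _ : Fin r => Module.End k V) i)
  AlgHom.ofLinearMap
    ((PiTensorProduct.mapMultilinear k (fun _ : Fin r => V) (fun _ => V)).toLinearMap 1 i)
    (map_one toMonoidHom) (map_mul toMonoidHom)

lemma factorEnd_apply (i : Fin r) (φ : Module.End k V) : factorEnd i φ =
    PiTensorProduct.mapMonoidHom (Pi.mulSingle i φ : Fin r → Module.End k V) := rfl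

lemma commute_factorEnd {i j : Fin r} (hij : i ≠ j) (φ ψ : Module.End k V) :
    Commute (factorEnd i φ) (factorEnd j ψ) := by
  rw [factorEnd_apply, factorEnd_apply]
  exact (Pi.mulSingle_commute (f := fun _ : Fin r => Module.End k V) hij φ ψ).map _

lemma prod_ofFn_factorEnd (φ : Fin r → Module.End k V) :
    (List.ofFn fun i => factorEnd i (φ i)).prod = PiTensorProduct.map φ := by
  conv_rhs => rw [← prod_ofFn_mulSingle φ]
  rw [← PiTensorProduct.mapMonoidHom_apply, map_list_prod, List.map_ofFn]
  rfl

variable {E T : Type*} [Semiring E] [Algebra k E] [AddCommMonoid T] [Module k T]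

variable (k E T) in
/-- Left multiplication on the first factor of `E ⊗ T`. -/
def leftMulEnd : E →ₐ[k] Module.End k (E ⊗[k] T) :=
  (Module.End.rTensorAlgHom k E T).comp (Algebra.lmul k E)

variable (k E T) in
/-- Right multiplication on the first factor of `E ⊗ T`. -/
def rightMulEnd : E →ₗ[k] Module.End k (E ⊗[k] T) :=
  (Module.End.rTensorAlgHom k E T).toLinearMap ∘ₗ (LinearMap.mul k E).flip

@[simp] lemma leftMulEnd_tmul (e x : E) (t : T) :
    leftMulEnd k E T e (x ⊗ₜ t) = (e * x) ⊗ₜ t := rfl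

@[simp] lemma rightMulEnd_tmul (e x : E) (t : T) :
    rightMulEnd k E T e (x ⊗ₜ t) = (x * e) ⊗ₜ t := rfl

lemma rightMulEnd_one : rightMulEnd k E T 1 = 1 :=
  TensorProduct.ext' fun x t => by simp

lemma rightMulEnd_mul (e e' : E) :
    rightMulEnd k E T (e * e') = rightMulEnd k E T e' * rightMulEnd k E T e :=
  TensorProduct.ext' fun x t => by simp [mul_assoc]

lemma commute_rightMulEnd_leftMulEnd (e e' : E) :
    Commute (rightMulEnd k E T e) (leftMulEnd k E T e') :=
  TensorProduct.ext' fun x t => by simp [mul_assoc]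

lemma rightMulEnd_eq_leftMulEnd {e : E} (he : ∀ x, Commute x e) :
    rightMulEnd k E T e = leftMulEnd k E T e :=
  TensorProduct.ext' fun x t => by simp [(he x).eq]

lemma commute_leftMulEnd_lTensorAlgHom (e : E) (φ : Module.End k T) :
    Commute (leftMulEnd k E T e) (Module.End.lTensorAlgHom k T E φ) :=
  TensorProduct.ext' fun _ _ => rfl

lemma commute_rightMulEnd_lTensorAlgHom (e : E) (φ : Module.End k T) :
    Commute (rightMulEnd k E T e) (Module.End.lTensorAlgHom k T E φ) :=
  TensorProduct.ext' fun _ _ => rfl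

end TensorOperators

section SweedlerSums

lemma map_swSum {H M N : Type*} {n : H → ℕ} {c₁ c₂ : H → ℕ → H}
    [AddCommMonoid M] [AddCommMonoid N] (φ : M →+ N) (r : ℕ) (h : H)
    (F : (Fin (r + 1) → H) → M) :
    φ (swSum (H := H) n c₁ c₂ r h F) = swSum (H := H) n c₁ c₂ r h fun v => φ (F v) := by
  induction r generalizing h with
  | zero => rfl
  | succ r ih => simp only [swSum, map_sum, ih]

variable {k H B : Type*} [CommRing k] [Ring H] [HopfAlgebra k H] [Semiring B] [Algebra k B]
  {n : H → ℕ} {c₁ c₂ : H → ℕ → H}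

lemma prod_ofFn_mul_apply (hrep : IsSweedlerRep k H n c₁ c₂) {r : ℕ} (s : Fin r → ConvHom k H B)
    (w : ConvHom k H B) (h : H) :
    ((List.ofFn s).prod * w) h = swSum (H := H) n c₁ c₂ r h fun v =>
      (List.ofFn fun i => s i (v i.castSucc)).prod * w (v (Fin.last r)) := by
  induction r generalizing h with
  | zero => simp [swSum]
  | succ r ih =>
    rw [List.ofFn_succ, List.prod_cons, mul_assoc, (sweedlerRepr hrep h).convMul_apply]
    refine Finset.sum_congr rfl fun i _ => ?_
    rw [ih]
    refine (map_swSum (AddMonoidHom.mulLeft _) r _ _).trans (congrArg _ (funext fun v => ?_))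
    simp only [List.ofFn_succ, List.prod_cons, mul_assoc]
    rfl

lemma mul_prod_ofFn_mul_apply (hrep : IsSweedlerRep k H n c₁ c₂) {r : ℕ} (u : ConvHom k H B)
    (s : Fin r → ConvHom k H B) (w : ConvHom k H B) (h : H) :
    (u * (List.ofFn s).prod * w) h = swSum (H := H) n c₁ c₂ (r + 1) h fun v =>
      u (v 0) * (List.ofFn fun i => s i (v i.succ.castSucc)).prod * w (v (Fin.last (r + 1))) := by
  have h := prod_ofFn_mul_apply hrep (Fin.cons u s : Fin (r + 1) → ConvHom k H B) w h
  simp only [List.ofFn_succ, List.prod_cons, Fin.cons_zero, Fin.cons_succ, Fin.castSucc_zero] at h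
  exact h

end SweedlerSums

section ScalarMaps

variable {k B B' C : Type*} [CommSemiring k] [Semiring B] [Algebra k B] [Semiring B']
  [Algebra k B']

lemma algHom_bot_eq (φ ψ : (⊥ : Subalgebra k B) →ₐ[k] B') : φ = ψ := by
  ext ⟨_, c, rfl⟩
  exact (φ.commutes c).trans (ψ.commutes c).symm

/-- A map with values in a subalgebra `S`, as a map into `S`. -/
def ConvHom.codRestrict [AddCommMonoid C] [Module k C] (u : ConvHom k C B) (S : Subalgebra k B)
    (h : ∀ c, u c ∈ S) : ConvHom k C S :=
  toConv (LinearMap.codRestrict (Subalgebra.toSubmodule S) u.ofConv h)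

lemma IsTwistedMul.of_map {H : Type*} [Semiring H] [Bialgebra k H] {φ : B →ₐ[k] B'}
    (hφ : Function.Injective φ) {F G : ConvHom k (H ⊗[k] H) B} {u : ConvHom k H B}
    (h : IsTwistedMul (postcomp φ F) (postcomp φ G) (postcomp φ u)) : IsTwistedMul F G u := by
  refine ConvHom.tensor_ext fun l m => hφ ?_
  rw [← postcomp_apply, ← postcomp_apply, map_mul, map_mul, map_mul]
  exact congrArg (fun v : ConvHom k (H ⊗[k] H) B' => v (l ⊗ₜ m)) h

end ScalarMaps

section DiagonalAction

variable {k V H : Type*} [CommSemiring k] [AddCommMonoid V] [Module k V] [Semiring H]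
  [Bialgebra k H]

/-- The diagonal extension `(v₁ ⊗ ⋯ ⊗ v_r)^h = v₁^{h⁽¹⁾} ⊗ ⋯ ⊗ v_r^{h⁽ʳ⁾}` to `V^{⊗ r}` of
`ρ : H → End V`, written as a convolution product over the tensor factors. -/
def diagonalAction (r : ℕ) (ρ : ConvHom k H (Module.End k V)) :
    ConvHom k H (Module.End k (⨂[k]^r V)) :=
  (List.ofFn fun i => postcomp (factorEnd i) ρ).prod

lemma diagonalAction_one (r : ℕ) {ρ : ConvHom k H (Module.End k V)} (hρ : ρ 1 = 1) :
    diagonalAction r ρ 1 = 1 := by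
  rw [← evalOne_apply, diagonalAction, map_list_prod, List.map_ofFn]
  simp [Function.comp_def, hρ]

lemma IsTwistedMul.postcomp_diagonalAction {A B : Type*} [Semiring A] [Algebra k A] [Semiring B]
    [Algebra k B] {r : ℕ} {F : ConvHom k (H ⊗[k] H) (⊥ : Subalgebra k A)}
    {ρ : ConvHom k H (Module.End k V)} {φ : (⊥ : Subalgebra k A) →ₐ[k] Module.End k V}
    (hρ : IsTwistedMul (postcomp φ F) (postcomp φ F) ρ)
    (χ : Module.End k (⨂[k]^r V) →ₐ[k] B) (ψ : (⊥ : Subalgebra k A) →ₐ[k] B) :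
    IsTwistedMul (postcomp ψ F) (postcomp ψ F) (postcomp χ (diagonalAction r ρ)) := by
  rw [diagonalAction, map_list_prod, List.map_ofFn]
  refine IsTwistedMul.list_prod (List.forall_mem_ofFn_iff.mpr fun i => ?_) <|
    List.pairwise_ofFn.mpr fun i j hij h l => (commute_factorEnd hij.ne (ρ h) (ρ l)).map χ
  rw [algHom_bot_eq ψ ((χ.comp (factorEnd i)).comp φ)]
  exact hρ.map (χ.comp (factorEnd i))

end DiagonalAction

section Action

variable {k A H : Type*} [CommRing k] [Ring A] [Algebra k A] [Ring H] [HopfAlgebra k H]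
  {σ : H →ₗ[k] A →ₗ[k] A} {f finv : H →ₗ[k] H →ₗ[k] A}

lemma ofBilin_mem_bot (hfk : ∀ h l, ∃ c : k, f h l = c • (1 : A)) (x : H ⊗[k] H) :
    ofBilin f x ∈ (⊥ : Subalgebra k A) := by
  induction x with
  | zero => exact map_zero (ofBilin f).ofConv ▸ zero_mem _
  | add x y hx hy => exact map_add (ofBilin f).ofConv x y ▸ add_mem hx hy
  | tmul h l =>
    obtain ⟨c, hc⟩ := hfk h l
    exact ⟨c, (Algebra.algebraMap_eq_smul_one c).trans hc.symm⟩

namespace IsCrossedSystem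

variable (hσf : IsCrossedSystem σ f)

lemma isCentralCocycle (hf : ∀ x, ofBilin f x ∈ (⊥ : Subalgebra k A))
    (hinv : ofBilin f * ofBilin finv = 1 ∧ ofBilin finv * ofBilin f = 1) :
    hσf.IsCentralCocycle finv where
  commute_incl e x := by
    obtain ⟨c, hc⟩ := hf x
    rw [← hc]
    exact (hσf.incl.commutes c).symm ▸ (Algebra.commutes c e).symm
  mul_inv := hinv.1
  inv_mul := hinv.2

include hσf in
lemma isTwistedMul_action (hf : ∀ x, ofBilin f x ∈ (⊥ : Subalgebra k A)) :
    IsTwistedMul (postcomp (Algebra.lmul k A) (ofBilin f))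
      (postcomp (Algebra.lmul k A) (ofBilin f)) (toConv σ) := by
  refine ConvHom.tensor_ext fun h l => LinearMap.ext fun a => ?_
  have twisted := congrArg (fun u : ConvHom k (H ⊗[k] H) A => u (h ⊗ₜ l)) (hσf.twisted_module a)
  simp only [convMul_tmul _ _ (ℛ k h) (ℛ k l)] at twisted
  rw [convMul_tmul _ _ (ℛ k h) (ℛ k l), convMul_tmul _ _ (ℛ k h) (ℛ k l)]
  simp only [precomp_fst_mul_precomp_snd, LinearMap.sum_apply]
  refine Eq.trans ?_ twisted
  refine Finset.sum_congr rfl fun i _ => Finset.sum_congr rfl fun j _ => ?_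
  obtain ⟨c, hc⟩ := Algebra.mem_bot.mp (hf ((ℛ k h).right i ⊗ₜ (ℛ k l).right j))
  rw [Module.End.mul_apply, Module.End.mul_apply, postcomp_apply, ← hc]
  simp [Algebra.algebraMap_eq_smul_one]

/-- The action of `H` on `A ⧸ k·1` induced by `σ`. -/
def quotientAction : ConvHom k H (Module.End k (A ⧸ Submodule.span k {(1 : A)})) :=
  postcomp (quotientEnd _) <| ConvHom.codRestrict (toConv σ) _ fun h =>
    mem_endStabilizer_span_singleton (hσf.action_one h)

lemma quotientAction_mkQ (h : H) (a : A) :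
    hσf.quotientAction h ((Submodule.span k {(1 : A)}).mkQ a) =
      (Submodule.span k {(1 : A)}).mkQ (σ h a) := rfl

lemma quotientAction_one : hσf.quotientAction 1 = 1 := by
  refine Submodule.linearMap_qext _ (LinearMap.ext fun a => ?_)
  exact (hσf.quotientAction_mkQ 1 a).trans (congrArg _ (hσf.one_action a))

lemma exists_isTwistedMul_quotientAction (hf : ∀ x, ofBilin f x ∈ (⊥ : Subalgebra k A)) :
    ∃ φ : (⊥ : Subalgebra k A) →ₐ[k] Module.End k (A ⧸ Submodule.span k {(1 : A)}),
      IsTwistedMul (postcomp φ ((ofBilin f).codRestrict ⊥ hf))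
        (postcomp φ ((ofBilin f).codRestrict ⊥ hf)) hσf.quotientAction := by
  let S := endStabilizer (Submodule.span k {(1 : A)})
  let φ : (⊥ : Subalgebra k A) →ₐ[k] S :=
    ((Algebra.lmul k A).comp (Subalgebra.val ⊥)).codRestrict S <| by
      rintro ⟨_, c, rfl⟩
      exact mem_endStabilizer_span_singleton ((mul_one _).trans (Algebra.algebraMap_eq_smul_one c))
  have twisted : IsTwistedMul (postcomp φ ((ofBilin f).codRestrict ⊥ hf))
      (postcomp φ ((ofBilin f).codRestrict ⊥ hf)) (ConvHom.codRestrict (toConv σ) S fun h =>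
        mem_endStabilizer_span_singleton (hσf.action_one h)) :=
    .of_map (φ := S.val) Subtype.val_injective (hσf.isTwistedMul_action hf)
  exact ⟨(quotientEnd _).comp φ, twisted.map (quotientEnd _)⟩

end IsCrossedSystem
end Action

section ConjugationAction

variable {k A H : Type*} [CommRing k] [Ring A] [Algebra k A] [Ring H] [HopfAlgebra k H]
  {σ : H →ₗ[k] A →ₗ[k] A} {f finv : H →ₗ[k] H →ₗ[k] A} {T : Type*} [AddCommMonoid T] [Module k T]

namespace IsCrossedSystem

/-- The operators `x ⊗ t ↦ γ(h) x ⊗ t`. -/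
def leftMulGamma (hσf : IsCrossedSystem σ f) (T : Type*) [AddCommMonoid T] [Module k T] :
    ConvHom k H (Module.End k (hσf.CrossedProduct ⊗[k] T)) :=
  postcomp (leftMulEnd k hσf.CrossedProduct T) hσf.gamma

/-- The operators `x ⊗ t ↦ x γ⁻¹(h) ⊗ t`. -/
def rightMulGammaInv (hσf : IsCrossedSystem σ f) (finv : H →ₗ[k] H →ₗ[k] A) (T : Type*)
    [AddCommMonoid T] [Module k T] : ConvHom k H (Module.End k (hσf.CrossedProduct ⊗[k] T)) :=
  toConv (rightMulEnd k hσf.CrossedProduct T ∘ₗ (hσf.gammaConvInv finv).ofConv)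

/-- The operators `x ⊗ t ↦ γ(h⁽³⁾) x γ⁻¹(h⁽¹⁾) ⊗ s(h⁽²⁾) t`, for `s : H → End T`. -/
def conjAction (hσf : IsCrossedSystem σ f) (finv : H →ₗ[k] H →ₗ[k] A)
    (s : ConvHom k H (Module.End k T)) :
    ConvHom k H (Module.End k (hσf.CrossedProduct ⊗[k] T)) :=
  hσf.rightMulGammaInv finv T * postcomp (Module.End.lTensorAlgHom k T hσf.CrossedProduct) s *
    hσf.leftMulGamma T

variable {hσf : IsCrossedSystem σ f}

lemma isTwistedMul_leftMulGamma :
    IsTwistedMul (postcomp ((leftMulEnd k hσf.CrossedProduct T).comp hσf.incl) (ofBilin f)) 1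
      (hσf.leftMulGamma T) := by
  have h := congrArg (postcomp (leftMulEnd k hσf.CrossedProduct T)) hσf.gamma_mul_gamma
  simp only [map_mul] at h
  exact (mul_one _).trans h

namespace IsCentralCocycle

variable (hf : hσf.IsCentralCocycle finv)

include hf

lemma isTwistedMul_rightMulGammaInv :
    IsTwistedMul 1 (postcomp ((leftMulEnd k hσf.CrossedProduct T).comp hσf.incl) (ofBilin f))
      (hσf.rightMulGammaInv finv T) := by
  refine ConvHom.tensor_ext fun h l => ?_
  have inv_mul_inv := congrArg (fun u : ConvHom k (H ⊗[k] H) _ =>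
    rightMulEnd k hσf.CrossedProduct T (u (h ⊗ₜ l))) hf.gammaConvInv_mul_gammaConvInv
  rw [one_mul]
  refine Eq.trans ?_ inv_mul_inv
  simp only [convMul_tmul _ _ (ℛ k h) (ℛ k l), precomp_fst_mul_precomp_snd,
    precomp_snd_mul_precomp_fst, map_sum]
  refine Finset.sum_congr rfl fun i _ => Finset.sum_congr rfl fun j _ => ?_
  rw [postcomp_apply, postcomp_apply, AlgHom.comp_apply,
    ← rightMulEnd_eq_leftMulEnd (hf.commute_incl · _), (hf.commute_incl _ _).eq, rightMulEnd_mul,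
    rightMulEnd_mul]
  rfl

lemma conjAction_one {s : ConvHom k H (Module.End k T)} (hs : s 1 = 1) :
    hσf.conjAction finv s 1 = 1 := by
  rw [← evalOne_apply, conjAction, map_mul, map_mul]
  simp [rightMulGammaInv, leftMulGamma, hf.gammaConvInv_one, rightMulEnd_one, gamma_one, hs]

lemma conjAction_mul {s : ConvHom k H (Module.End k T)}
    (hs : IsTwistedMul (postcomp ((leftMulEnd k hσf.CrossedProduct T).comp hσf.incl) (ofBilin f))
      (postcomp ((leftMulEnd k hσf.CrossedProduct T).comp hσf.incl) (ofBilin f))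
      (postcomp (Module.End.lTensorAlgHom k T hσf.CrossedProduct) s)) (l h : H) :
    hσf.conjAction finv s (l * h) = hσf.conjAction finv s l * hσf.conjAction finv s h := by
  have commute_left : ValuesCommute (hσf.rightMulGammaInv finv T *
      postcomp (Module.End.lTensorAlgHom k T hσf.CrossedProduct) s) (hσf.leftMulGamma T) :=
    .mul_left (fun _ _ => commute_rightMulEnd_leftMulEnd _ _)
      fun _ _ => (commute_leftMulEnd_lTensorAlgHom _ _).symm
  exact ((hf.isTwistedMul_rightMulGammaInv.mul hs fun _ _ =>
    commute_rightMulEnd_lTensorAlgHom _ _).mul isTwistedMul_leftMulGamma commute_left).apply_mul l h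

end IsCentralCocycle

lemma conjAction_diagonalAction_apply (hσf : IsCrossedSystem σ f) {n : H → ℕ} {c₁ c₂ : H → ℕ → H}
    (hrep : IsSweedlerRep k H n c₁ c₂) {V : Type*} [AddCommMonoid V] [Module k V] {r : ℕ}
    (ρ : ConvHom k H (Module.End k V)) (h : H) (x : hσf.CrossedProduct) (b : Fin r → V) :
    hσf.conjAction finv (diagonalAction r ρ) h (x ⊗ₜ PiTensorProduct.tprod k b) =
      swSum (H := H) n c₁ c₂ (r + 1) h fun v =>
        (hσf.gamma (v (Fin.last (r + 1))) * x * hσf.gammaConvInv finv (v 0)) ⊗ₜ[k]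
          PiTensorProduct.tprod k fun i => ρ (v i.succ.castSucc) (b i) := by
  rw [conjAction, diagonalAction, map_list_prod, List.map_ofFn, mul_prod_ofFn_mul_apply hrep]
  refine (map_swSum (LinearMap.applyₗ (x ⊗ₜ[k] PiTensorProduct.tprod k b)).toAddMonoidHom
    _ _ _).trans (congrArg _ (funext fun v => ?_))
  have middle : (List.ofFn fun i => Module.End.lTensorAlgHom k (⨂[k]^r V) hσf.CrossedProduct
      (factorEnd i (ρ (v i.succ.castSucc)))).prod = Module.End.lTensorAlgHom k _ _
        (PiTensorProduct.map fun i => ρ (v i.succ.castSucc)) := by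
    rw [← prod_ofFn_factorEnd, map_list_prod, List.map_ofFn]
    rfl
  rw [← PiTensorProduct.map_tprod]
  exact LinearMap.congr_fun (congrArg (fun φ => hσf.rightMulGammaInv finv _ (v 0) * φ *
    hσf.leftMulGamma _ (v (Fin.last (r + 1)))) middle) (x ⊗ₜ PiTensorProduct.tprod k b)

end IsCrossedSystem
end ConjugationAction

end

end HopfCrossedProduct

/-- Proposition 3.7, absolute case `K = k`. Assume `E = A #_f H` is a
crossed product with convolution invertible cocycle `f` taking values in `k·1_A`.  Let
`Ā = A/k·1_A` and `M_r = E ⊗ Ā^{⊗r}`.  Then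
`h ▶ (x ⊗ ā₁ ⊗ ⋯ ⊗ ā_r) = γ(h⁽³⁾) x γ⁻¹(h⁽¹⁾) ⊗ (a₁ ⊗ ⋯ ⊗ a_r)^{h⁽²⁾}` gives a
well-defined `k`-linear map making `M_r` a left `H`-module. -/
theorem crossed_product_module_structure
    (k A H : Type*) [CommRing k] [Ring A] [Algebra k A] [Ring H] [HopfAlgebra k H]
    (σ : H →ₗ[k] A →ₗ[k] A) (f finv : H →ₗ[k] H →ₗ[k] A)
    (n : H → ℕ) (c₁ c₂ : H → ℕ → H)
    (hrep : IsSweedlerRep k H n c₁ c₂)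
    (hweak : IsWeakAction k A H n c₁ c₂ σ)
    (hnormal : IsNormal k A H f)
    (hcocycle : IsCocycle k A H n c₁ c₂ σ f)
    (htwisted : IsTwistedModule k A H n c₁ c₂ σ f)
    (hinv : IsConvInverse k A H n c₁ c₂ f finv)
    (hfk : ∀ h l : H, ∃ c : k, f h l = c • (1 : A))
    (r : ℕ) :
    ∃ act : H →ₗ[k]
        ((A ⊗[k] H) ⊗[k] (⨂[k]^r (A ⧸ (Submodule.span k {(1 : A)})))) →ₗ[k]
          ((A ⊗[k] H) ⊗[k] (⨂[k]^r (A ⧸ (Submodule.span k {(1 : A)})))),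
      (∀ (x : A ⊗[k] H) (a : Fin r → A) (h : H),
        act h (x ⊗ₜ[k]
            (PiTensorProduct.tprod k fun i : Fin r =>
              (Submodule.span k {(1 : A)}).mkQ (a i))) =
          swSum (H := H) n c₁ c₂ (r + 1) h (fun v : Fin (r + 2) → H =>
            (crossedMul k A H σ f
                (crossedMul k A H σ f (gam k A H (v (Fin.last (r + 1)))) x)
                (gammaInv k A H finv (v 0))) ⊗ₜ[k]
              (PiTensorProduct.tprod k fun i : Fin r =>
                (Submodule.span k {(1 : A)}).mkQ (σ (v i.succ.castSucc) (a i))))) ∧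
      (∀ m, act (1 : H) m = m) ∧
      (∀ (h l : H) (m), act (l * h) m = act l (act h m)) := by
  have hσf := HopfCrossedProduct.isCrossedSystem_of_sweedler hrep hweak hnormal hcocycle htwisted
  have hbot := HopfCrossedProduct.ofBilin_mem_bot hfk
  have hf := hσf.isCentralCocycle hbot (HopfCrossedProduct.convInverse_of_sweedler hrep hinv)
  obtain ⟨_, twisted⟩ := hσf.exists_isTwistedMul_quotientAction hbot
  let s := HopfCrossedProduct.diagonalAction r hσf.quotientAction
  have s_one : s 1 = 1 := HopfCrossedProduct.diagonalAction_one r hσf.quotientAction_one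
  let leftMul := (HopfCrossedProduct.leftMulEnd k hσf.CrossedProduct
    (⨂[k]^r (A ⧸ Submodule.span k {(1 : A)}))).comp hσf.incl
  have s_twisted := twisted.postcomp_diagonalAction
    (Module.End.lTensorAlgHom k _ hσf.CrossedProduct) (leftMul.comp (Subalgebra.val ⊥))
  let act := (hσf.conjAction finv s).ofConv
  refine ⟨act, fun x a h => ?_, fun m => ?_, fun h l m => ?_⟩
  · exact hσf.conjAction_diagonalAction_apply hrep hσf.quotientAction h x _
  · exact LinearMap.congr_fun (hf.conjAction_one s_one) m
  · exact LinearMap.congr_fun (hf.conjAction_mul s_twisted l h) m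
end

section
/- Assume conditions (i)–(iii) hold, so E = A #_f H is a crossed product. Then the k-linear map ν = id_A ⊗ Δ : E → E ⊗_k H is a homomorphism of unital k-algebras (where E ⊗_k H carries the tensor product algebra structure), it is coassociative, (ν ⊗ id_H) ∘ ν = (id_E ⊗ Δ) ∘ ν, and counital, (id_E ⊗ ε) ∘ ν = id_E. In other words, ν makes E a right H-comodule algebra. -/
open TensorProduct

section Statement5

variable (k A H : Type*) [CommRing k] [Ring A] [Algebra k A] [Ring H] [HopfAlgebra k H]

/-- The tensor product algebra multiplication on `(A #_f H) ⊗[k] H`: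
`(x ⊗ h)(y ⊗ l) = xy ⊗ hl`. -/
noncomputable def mulEH (σ : H →ₗ[k] A →ₗ[k] A) (f : H →ₗ[k] H →ₗ[k] A) :
    ((A ⊗[k] H) ⊗[k] H) →ₗ[k] ((A ⊗[k] H) ⊗[k] H) →ₗ[k] (A ⊗[k] H) ⊗[k] H :=
  TensorProduct.curry
    ((TensorProduct.map (TensorProduct.lift (crossedMul k A H σ f)) (LinearMap.mul' k H)) ∘ₗ
      (TensorProduct.tensorTensorTensorComm k (A ⊗[k] H) H (A ⊗[k] H) H).toLinearMap)

end Statement5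

/-!
For any coalgebra `D` and any module `M`, the module `M ⊗ D` is the cofree right `D`-comodule on `M`
with coaction `id ⊗ Δ`; coassociativity and counitality of `ν` are those of `Δ`.
For fixed `a` and `b`, the map `h ⊗ l ↦ (a # h)(b # l)` has the form `(φ ⊗ μ) ∘ Δ_{H ⊗ H}`, where
`φ (h ⊗ l) = a b^{h⁽¹⁾} f(h⁽²⁾, l)` and `μ` is the product of `H`. Since `μ` is a coalgebra map, any
map of this form is, by coassociativity, a morphism of `H`-comodules, with `H` coacting on `H ⊗ H`
through `μ`, and this is the multiplicativity of `ν`.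
-/

section CofreeComodule

open Coalgebra

variable {k M C D : Type*} [CommSemiring k] [AddCommMonoid M] [Module k M]
  [AddCommMonoid C] [Module k C] [Coalgebra k C] [AddCommMonoid D] [Module k D] [Coalgebra k D]

variable (k M C) in
/-- The coaction `id_M ⊗ Δ` of the cofree right `C`-comodule `M ⊗ C`. -/
noncomputable def cofreeCoaction : M ⊗[k] C →ₗ[k] (M ⊗[k] C) ⊗[k] C :=
  (TensorProduct.assoc k M C C).symm.toLinearMap ∘ₗ LinearMap.lTensor M (comul (R := k))

theorem cofreeCoaction_coassoc :
    LinearMap.rTensor C (cofreeCoaction k M C) ∘ₗ cofreeCoaction k M C =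
      (TensorProduct.assoc k (M ⊗[k] C) C C).symm.toLinearMap ∘ₗ
        LinearMap.lTensor (M ⊗[k] C) (comul (R := k)) ∘ₗ cofreeCoaction k M C := by
  ext m c
  have h := congr((TensorProduct.assoc k (M ⊗[k] C) C C).symm
    ((TensorProduct.assoc k M C (C ⊗[k] C)).symm (m ⊗ₜ $(sum_tmul_tmul_eq (ℛ k c)
      (fun i ↦ ℛ k ((ℛ k c).left i)) (fun i ↦ ℛ k ((ℛ k c).right i))))))
  simpa [cofreeCoaction, ← (ℛ k c).eq, ← (ℛ k ((ℛ k c).left _)).eq,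
    ← (ℛ k ((ℛ k c).right _)).eq, TensorProduct.tmul_sum, TensorProduct.sum_tmul] using h

theorem cofreeCoaction_counit :
    (TensorProduct.rid k (M ⊗[k] C)).toLinearMap ∘ₗ
        LinearMap.lTensor (M ⊗[k] C) (counit (R := k)) ∘ₗ cofreeCoaction k M C =
      LinearMap.id := by
  ext m c
  have h := congr(m ⊗ₜ[k] TensorProduct.rid k C $(sum_tmul_counit_eq (ℛ k c)))
  -- Without the exclusion, `simp` closes `h` itself.
  simpa [-sum_tmul_counit_eq, cofreeCoaction, ← (ℛ k c).eq,
    TensorProduct.tmul_sum] using h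

/-- The linear map `(φ ⊗ g) ∘ Δ` into the cofree comodule `M ⊗ D` that corresponds to
`φ : C → M`, where `C` is a right `D`-comodule along the coalgebra map `g`. -/
noncomputable def cofreeLift (φ : C →ₗ[k] M) (g : C →ₗc[k] D) : C →ₗ[k] M ⊗[k] D :=
  TensorProduct.map φ g.toLinearMap ∘ₗ comul (R := k)

theorem cofreeCoaction_comp_cofreeLift (φ : C →ₗ[k] M) (g : C →ₗc[k] D) :
    cofreeCoaction k M D ∘ₗ cofreeLift φ g =
      TensorProduct.map (cofreeLift φ g) g.toLinearMap ∘ₗ comul (R := k) := by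
  simp only [cofreeCoaction, cofreeLift, coassoc_simps, ← g.map_comp_comul]

end CofreeComodule

section CrossedProductCoaction

open Coalgebra

variable {k A H : Type*} [CommRing k] [Ring A] [Algebra k A] [Ring H] [HopfAlgebra k H]

variable (k A H) in
theorem nuE_eq_cofreeCoaction : nuE k A H = cofreeCoaction k A H := rfl

/-- The `A`-component `h ⊗ l ↦ a b^{h⁽¹⁾} f(h⁽²⁾, l)` of the product `(a # h)(b # l)`. -/
noncomputable def crossedCoeff (σ : H →ₗ[k] A →ₗ[k] A) (f : H →ₗ[k] H →ₗ[k] A) (a b : A) :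
    H ⊗[k] H →ₗ[k] A :=
  LinearMap.mulLeft k a ∘ₗ LinearMap.mul' k A ∘ₗ
    TensorProduct.map (σ.flip b) (TensorProduct.lift f) ∘ₗ
      (TensorProduct.assoc k H H H).toLinearMap ∘ₗ LinearMap.rTensor H (comul (R := k))

theorem crossedMul_tmul (σ : H →ₗ[k] A →ₗ[k] A) (f : H →ₗ[k] H →ₗ[k] A) (a b : A) (h l : H) :
    crossedMul k A H σ f (a ⊗ₜ h) (b ⊗ₜ l) =
      cofreeLift (crossedCoeff σ f a b) (Bialgebra.mulCoalgHom k H) (h ⊗ₜ l) := by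
  simp only [crossedMul, cofreeLift, TensorProduct.lift.tmul, LinearMap.compl₂_apply,
    LinearMap.comp_apply, TensorProduct.curry_apply, LinearMap.llcomp_apply,
    TensorProduct.map_tmul, LinearMap.lTensor_tmul, LinearEquiv.coe_coe, TensorProduct.comul_tmul]
  rw [← (ℛ k h).eq, ← (ℛ k l).eq]
  simp only [map_sum, TensorProduct.tmul_sum, TensorProduct.sum_tmul]
  refine Finset.sum_congr rfl fun j _ ↦ Finset.sum_congr rfl fun i _ ↦ ?_
  simp [crossedCoeff, ← (ℛ k ((ℛ k h).left i)).eq, TensorProduct.sum_tmul,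
    TensorProduct.tmul_sum]

theorem mulEH_nuE_tmul (σ : H →ₗ[k] A →ₗ[k] A) (f : H →ₗ[k] H →ₗ[k] A) (a b : A) (h l : H) :
    mulEH k A H σ f (nuE k A H (a ⊗ₜ h)) (nuE k A H (b ⊗ₜ l)) =
      TensorProduct.map (cofreeLift (crossedCoeff σ f a b) (Bialgebra.mulCoalgHom k H))
        (Bialgebra.mulCoalgHom k H).toLinearMap (comul (R := k) (h ⊗ₜ[k] l)) := by
  simp only [nuE, mulEH, LinearMap.comp_apply, LinearMap.lTensor_tmul, TensorProduct.comul_tmul]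
  rw [← (ℛ k h).eq, ← (ℛ k l).eq]
  simp [TensorProduct.tmul_sum, TensorProduct.sum_tmul, crossedMul_tmul]

theorem nuE_crossedMul (σ : H →ₗ[k] A →ₗ[k] A) (f : H →ₗ[k] H →ₗ[k] A) (x y : A ⊗[k] H) :
    nuE k A H (crossedMul k A H σ f x y) = mulEH k A H σ f (nuE k A H x) (nuE k A H y) := by
  induction x with
  | zero => simp
  | add x₁ x₂ hx₁ hx₂ => simp only [map_add, LinearMap.add_apply, hx₁, hx₂]
  | tmul a h =>
    induction y with
    | zero => simp
    | add y₁ y₂ hy₁ hy₂ => simp only [map_add, hy₁, hy₂]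
    | tmul b l =>
      rw [mulEH_nuE_tmul, crossedMul_tmul, nuE_eq_cofreeCoaction, ← LinearMap.comp_apply,
        cofreeCoaction_comp_cofreeLift, LinearMap.comp_apply]

theorem nuE_oneE : nuE k A H (oneE k A H) = oneE k A H ⊗ₜ[k] (1 : H) := by
  simp [nuE, oneE, Algebra.TensorProduct.one_def]

theorem nu_comodule_algebra_general (σ : H →ₗ[k] A →ₗ[k] A) (f : H →ₗ[k] H →ₗ[k] A) :
    (∀ x y : A ⊗[k] H,
        nuE k A H (crossedMul k A H σ f x y) =
          mulEH k A H σ f (nuE k A H x) (nuE k A H y)) ∧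
    (nuE k A H (oneE k A H) = oneE k A H ⊗ₜ[k] (1 : H)) ∧
    ((LinearMap.rTensor H (nuE k A H)) ∘ₗ (nuE k A H) =
      (TensorProduct.assoc k (A ⊗[k] H) H H).symm.toLinearMap ∘ₗ
        (LinearMap.lTensor (A ⊗[k] H) (Coalgebra.comul (R := k))) ∘ₗ (nuE k A H)) ∧
    ((TensorProduct.rid k (A ⊗[k] H)).toLinearMap ∘ₗ
        (LinearMap.lTensor (A ⊗[k] H) (Coalgebra.counit (R := k))) ∘ₗ (nuE k A H) =
      LinearMap.id) := by
  refine ⟨nuE_crossedMul σ f, nuE_oneE, ?_, ?_⟩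
  · rw [nuE_eq_cofreeCoaction, cofreeCoaction_coassoc]
  · rw [nuE_eq_cofreeCoaction, cofreeCoaction_counit]

end CrossedProductCoaction

section Statement5

variable (k A H : Type*) [CommRing k] [Ring A] [Algebra k A] [Ring H] [HopfAlgebra k H]

/-- For a crossed product `E = A #_f H`, the map `ν = id_A ⊗ Δ : E → E ⊗ H`
is a homomorphism of unital `k`-algebras, coassociative and counital; i.e. it makes `E` a
right `H`-comodule algebra. -/
theorem nu_comodule_algebra
    (σ : H →ₗ[k] A →ₗ[k] A) (f : H →ₗ[k] H →ₗ[k] A)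
    (n : H → ℕ) (c₁ c₂ : H → ℕ → H)
    (hrep : IsSweedlerRep k H n c₁ c₂)
    (hweak : IsWeakAction k A H n c₁ c₂ σ)
    (hnormal : IsNormal k A H f)
    (hcocycle : IsCocycle k A H n c₁ c₂ σ f)
    (htwisted : IsTwistedModule k A H n c₁ c₂ σ f) :
    (∀ x y : A ⊗[k] H,
        nuE k A H (crossedMul k A H σ f x y) =
          mulEH k A H σ f (nuE k A H x) (nuE k A H y)) ∧
    (nuE k A H (oneE k A H) = oneE k A H ⊗ₜ[k] (1 : H)) ∧
    ((LinearMap.rTensor H (nuE k A H)) ∘ₗ (nuE k A H) =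
      (TensorProduct.assoc k (A ⊗[k] H) H H).symm.toLinearMap ∘ₗ
        (LinearMap.lTensor (A ⊗[k] H) (Coalgebra.comul (R := k))) ∘ₗ (nuE k A H)) ∧
    ((TensorProduct.rid k (A ⊗[k] H)).toLinearMap ∘ₗ
        (LinearMap.lTensor (A ⊗[k] H) (Coalgebra.counit (R := k))) ∘ₗ (nuE k A H) =
      LinearMap.id) :=
  nu_comodule_algebra_general σ f

end Statement5
end

section
/- Assume conditions (i)–(iii) hold and f is convolution invertible with inverse f^{-1}. Then for every h ∈ H one has ν(γ^{-1}(h)) = γ^{-1}(h^{(2)}) ⊗ S(h^{(1)}) in E ⊗_k H, where ν = id_A ⊗ Δ : E → E ⊗_k H is the canonical coaction on E = A #_f H. -/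
open TensorProduct

/-!
The antipode is the convolution inverse of the identity. Hence `Δ ∘ S` is a right convolution
inverse of `Δ = ι₁ * ι₂`, while `(ι₂ ∘ S) * (ι₁ ∘ S)`, that is `h ↦ S(h⁽²⁾) ⊗ S(h⁽¹⁾)`, is a left
one, and the two agree. The map `γ⁻¹` has the form `h ↦ g(h⁽²⁾) ⊗ S(h⁽¹⁾)`, so applying `Δ` to its
last factor only reindexes, by coassociativity, a threefold comultiplication.
-/

section

open Coalgebra HopfAlgebra WithConv

section ComulMapSwap

variable {R C M N P : Type*} [CommSemiring R] [AddCommMonoid C] [Module R C]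
  [AddCommMonoid M] [Module R M] [AddCommMonoid N] [Module R N] [AddCommMonoid P] [Module R P]

section CoalgebraStruct

variable [CoalgebraStruct R C]

/-- The map `c ↦ v(c⁽²⁾) ⊗ u(c⁽¹⁾)`, the common shape of `γ⁻¹`, of `ν ∘ γ⁻¹` and of `Δ ∘ S`. -/
noncomputable def comulMapSwap (u : C →ₗ[R] M) (v : C →ₗ[R] N) : C →ₗ[R] N ⊗[R] M :=
  (TensorProduct.comm R M N).toLinearMap ∘ₗ TensorProduct.map u v ∘ₗ comul

lemma comulMapSwap_apply_eq_sum {ι : Type*} {c : C} (r : Coalgebra.Repr R c ι)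
    (u : C →ₗ[R] M) (v : C →ₗ[R] N) :
    comulMapSwap u v c = ∑ i ∈ r.index, v (r.right i) ⊗ₜ[R] u (r.left i) := by
  simp [comulMapSwap, ← r.eq]

lemma lTensor_comp_comulMapSwap (φ : M →ₗ[R] P) (u : C →ₗ[R] M) (v : C →ₗ[R] N) :
    φ.lTensor N ∘ₗ comulMapSwap u v = comulMapSwap (φ ∘ₗ u) v := by
  ext c
  simp [comulMapSwap_apply_eq_sum (ℛ R c)]

variable {A B : Type*} [Semiring A] [Algebra R A] [Semiring B] [Algebra R B]

lemma includeLeft_convMul_includeRight (u : C →ₗ[R] A) (v : C →ₗ[R] B) :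
    toConv ((Algebra.TensorProduct.includeLeft : A →ₐ[R] A ⊗[R] B).toLinearMap ∘ₗ u) *
        toConv ((Algebra.TensorProduct.includeRight : B →ₐ[R] A ⊗[R] B).toLinearMap ∘ₗ v) =
      toConv (TensorProduct.map u v ∘ₗ comul) := by
  ext c
  rw [(ℛ R c).convMul_apply]
  simp [← (ℛ R c).eq]

lemma includeRight_convMul_includeLeft (u : C →ₗ[R] B) (v : C →ₗ[R] A) :
    toConv ((Algebra.TensorProduct.includeRight : B →ₐ[R] A ⊗[R] B).toLinearMap ∘ₗ u) *
        toConv ((Algebra.TensorProduct.includeLeft : A →ₐ[R] A ⊗[R] B).toLinearMap ∘ₗ v) =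
      toConv (comulMapSwap u v) := by
  ext c
  rw [(ℛ R c).convMul_apply]
  simp [comulMapSwap_apply_eq_sum (ℛ R c)]

end CoalgebraStruct

variable [Coalgebra R C]

lemma assoc_symm_comp_comulMapSwap (u : C →ₗ[R] M) (v : C →ₗ[R] N) (w : C →ₗ[R] P) :
    (TensorProduct.assoc R P N M).symm.toLinearMap ∘ₗ comulMapSwap (comulMapSwap u v) w =
      comulMapSwap u (comulMapSwap v w) := by
  ext c
  have swap_coassoc := congr((TensorProduct.comm R M (P ⊗[R] N)).toLinearMap ∘ₗ
    TensorProduct.map u ((TensorProduct.comm R N P).toLinearMap ∘ₗ TensorProduct.map v w) <|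
    $(sum_tmul_tmul_eq (ℛ R c) (fun i ↦ ℛ R ((ℛ R c).left i)) (fun i ↦ ℛ R ((ℛ R c).right i))))
  simpa [comulMapSwap_apply_eq_sum (ℛ R _), TensorProduct.tmul_sum,
    TensorProduct.sum_tmul] using swap_coassoc

lemma assoc_symm_comp_lTensor_comul_comp_comulMapSwap {D : Type*} [AddCommMonoid D] [Module R D]
    [CoalgebraStruct R D] {T : C →ₗ[R] D} (hT : comul ∘ₗ T = comulMapSwap T T) (g : C →ₗ[R] M) :
    (TensorProduct.assoc R M D D).symm.toLinearMap ∘ₗ comul.lTensor M ∘ₗ comulMapSwap T g =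
      comulMapSwap T (comulMapSwap T g) := by
  rw [lTensor_comp_comulMapSwap, hT, assoc_symm_comp_comulMapSwap]

end ComulMapSwap

section Antipode

variable {R H : Type*} [CommSemiring R] [Semiring H] [HopfAlgebra R H]

lemma algHom_comp_antipode_convMul {B : Type*} [Semiring B] [Algebra R B] (φ : H →ₐ[R] B) :
    toConv (φ.toLinearMap ∘ₗ antipode R) * toConv φ.toLinearMap = 1 := by
  calc
    _ = toConv (φ.toLinearMap ∘ₗ (toConv (antipode R (A := H)) * toConv LinearMap.id).ofConv) := by
      rw [LinearMap.algHom_comp_convMul_distrib, toConv_ofConv, ofConv_toConv, ofConv_toConv,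
        LinearMap.comp_id]
    _ = 1 := by
      rw [LinearMap.antipode_mul_id]
      ext h
      simp

theorem comul_comp_antipode :
    comul ∘ₗ antipode R = comulMapSwap (antipode R) (antipode R (A := H)) := by
  let ι₁ : H →ₐ[R] H ⊗[R] H := Algebra.TensorProduct.includeLeft
  let ι₂ : H →ₐ[R] H ⊗[R] H := Algebra.TensorProduct.includeRight
  have comul_eq : toConv ι₁.toLinearMap * toConv ι₂.toLinearMap = toConv comul := by
    simpa only [LinearMap.comp_id, TensorProduct.map_id, LinearMap.id_comp] using
      includeLeft_convMul_includeRight (.id : H →ₗ[R] H) .id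
  have left_inv : toConv (comulMapSwap (antipode R) (antipode R)) * toConv (comul (A := H)) = 1 :=
    calc
      _ = toConv (ι₂.toLinearMap ∘ₗ antipode R) * toConv (ι₁.toLinearMap ∘ₗ antipode R) *
            (toConv ι₁.toLinearMap * toConv ι₂.toLinearMap) := by
        rw [includeRight_convMul_includeLeft, comul_eq]
      _ = toConv (ι₂.toLinearMap ∘ₗ antipode R) * toConv ι₂.toLinearMap := by
        rw [mul_assoc, ← mul_assoc (toConv (ι₁.toLinearMap ∘ₗ _)),
          algHom_comp_antipode_convMul, one_mul]
      _ = 1 := algHom_comp_antipode_convMul ι₂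
  exact (toConv_injective (left_inv_eq_right_inv left_inv LinearMap.comul_right_inv)).symm

end Antipode

section Coaction

variable {k A H : Type*} [CommRing k] [Ring A] [Algebra k A] [Ring H] [HopfAlgebra k H]

lemma gammaInv_eq_comulMapSwap (g : H →ₗ[k] H →ₗ[k] A) :
    gammaInv k A H g = comulMapSwap (antipode k)
      (TensorProduct.lift g ∘ₗ (antipode k).rTensor H ∘ₗ comul) := by
  ext h
  simp [gammaInv, comulMapSwap, ← (ℛ k h).eq]

theorem nuE_comp_gammaInv (g : H →ₗ[k] H →ₗ[k] A) :
    nuE k A H ∘ₗ gammaInv k A H g = comulMapSwap (antipode k) (gammaInv k A H g) := by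
  rw [gammaInv_eq_comulMapSwap, nuE, LinearMap.comp_assoc,
    assoc_symm_comp_lTensor_comul_comp_comulMapSwap comul_comp_antipode]

theorem nu_gammaInv_general (g : H →ₗ[k] H →ₗ[k] A) {ι : Type*} {h : H}
    (r : Coalgebra.Repr k h ι) :
    nuE k A H (gammaInv k A H g h) =
      ∑ i ∈ r.index, gammaInv k A H g (r.right i) ⊗ₜ[k] antipode k (r.left i) := by
  rw [← comulMapSwap_apply_eq_sum r, ← nuE_comp_gammaInv, LinearMap.comp_apply]

end Coaction

end

/-- If `E = A #_f H` is a crossed product with convolution invertible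
cocycle, then `ν(γ⁻¹(h)) = γ⁻¹(h⁽²⁾) ⊗ S(h⁽¹⁾)` for all `h ∈ H`. -/
theorem nu_gammaInv
    (k A H : Type*) [CommRing k] [Ring A] [Algebra k A] [Ring H] [HopfAlgebra k H]
    (σ : H →ₗ[k] A →ₗ[k] A) (f finv : H →ₗ[k] H →ₗ[k] A)
    (n : H → ℕ) (c₁ c₂ : H → ℕ → H)
    (hrep : IsSweedlerRep k H n c₁ c₂)
    (hweak : IsWeakAction k A H n c₁ c₂ σ)
    (hnormal : IsNormal k A H f)
    (hcocycle : IsCocycle k A H n c₁ c₂ σ f)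
    (htwisted : IsTwistedModule k A H n c₁ c₂ σ f)
    (hinv : IsConvInverse k A H n c₁ c₂ f finv) :
    ∀ h : H,
      nuE k A H (gammaInv k A H finv h) =
        ∑ i ∈ Finset.range (n h),
          gammaInv k A H finv (c₂ h i) ⊗ₜ[k] HopfAlgebra.antipode (R := k) (c₁ h i) := by
  intro h
  exact nu_gammaInv_general finv ⟨Finset.range (n h), c₁ h, c₂ h, (hrep h).symm⟩
end
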